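/- arXiv:1802.09682 — 2 statements merged into one kernel-verified Lean document; each statement's English description precedes it below -/
import Mathlib

section
/- Let p : ℝᵈ → ℝ be a nonnegative, integrable probability density (∫ p = 1) that is log-concave, i.e., p((1−λ)x + λy) ≥ p(x)^{1−λ} p(y)^{λ} for all x, y ∈ ℝᵈ and λ ∈ [0,1], and symmetric, i.e., p(−x) = p(x) for all x. Define f(x) := ∫_{{ξ ∈ ℝᵈ : |⟨ξ, x⟩| ≤ 1}} p(ξ) dξ. Then f(x) > 0 for every x ∈ ℝᵈ and the function h(x) := 1/f(x) is convex on ℝᵈ. -/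
open MeasureTheory Filter
open scoped InnerProductSpace

/-!
Let `ℓ₁ ≠ ℓ₂` be two functionals and cut the half-space `{ℓ₂ - ℓ₁ > 0}` into level sets of
`ℓ₂ - ℓ₁`. If `θ + η = 1` and the levels of `x` and `y` satisfy
`θ b (ℓ₂ - ℓ₁) x = η a (ℓ₂ - ℓ₁) y`, then
`(a ℓ₁ + b ℓ₂) (θ x + η y) = θ ℓ₁ x + η ℓ₂ y`, so `θ x + η y` lies in the slab of `a ℓ₁ + b ℓ₂`
as soon as `x` and `y` lie in those of `ℓ₁` and `ℓ₂`. The Prékopa–Leindler inequality on the level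
sets therefore bounds the mass of the mixed slab at the weighted harmonic mean of two levels from
below by a geometric mean of the slice masses. The substitution `r = x⁻¹` turns harmonic means into
arithmetic ones, and its Jacobian `x⁻²` is exactly what reduces the claim to the
Borell–Brascamp–Lieb inequality on the line with exponent `-1/2`, whose conclusion is convexity of
the reciprocal of the integral. For an even density the slab mass is twice the half-space mass.
The Prékopa–Leindler inequality on the line is itself Borell–Brascamp–Lieb for functions normalised
to integral one.
-/

section

open Set
open scoped ENNReal Pointwise Topology

section OneDimensional

theorem volume_add_volume_le_volume_add {A B : Set ℝ} (hA : MeasurableSet A)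
    (hB : MeasurableSet B) (hA_ne : A.Nonempty) (hB_ne : B.Nonempty) :
    volume A + volume B ≤ volume (A + B) := by
  obtain ⟨a₀, ha₀⟩ := hA_ne
  obtain ⟨b₀, hb₀⟩ := hB_ne
  have volume_add_le_of_isCompact : ∀ K : Set ℝ, K ⊆ A ∧ IsCompact K →
      ∀ L : Set ℝ, L ⊆ B ∧ IsCompact L → volume K + volume L ≤ volume (A + B) := by
    -- Translates of `K` and `L` placed inside `A + B` so that they meet in at most one point.
    rintro K ⟨hKA, hK⟩ L ⟨hLB, hL⟩
    obtain ⟨m, hmK, hm⟩ := (hK.insert a₀).exists_isGreatest (insert_nonempty a₀ K)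
    obtain ⟨l, hlL, hl⟩ := (hL.insert b₀).exists_isLeast (insert_nonempty b₀ L)
    have hmA : m ∈ A := insert_subset ha₀ hKA hmK
    have hlB : l ∈ B := insert_subset hb₀ hLB hlL
    have hdisj : AEDisjoint volume ((· + l) '' K) ((m + ·) '' L) := by
      refine measure_mono_null (t := {m + l}) ?_ (measure_singleton _)
      rintro _ ⟨⟨k, hk, rfl⟩, ⟨j, hj, hjk : m + j = k + l⟩⟩
      have hkm : k ≤ m := hm (mem_insert_of_mem _ hk)
      have hlj : l ≤ j := hl (mem_insert_of_mem _ hj)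
      exact mem_singleton_iff.2 (by linarith)
    have hmeas : NullMeasurableSet ((m + ·) '' L) :=
      (hL.image (by fun_prop)).measurableSet.nullMeasurableSet
    calc volume K + volume L
        = volume ((· + l) '' K) + volume ((m + ·) '' L) := by simp
      _ = volume ((· + l) '' K ∪ (m + ·) '' L) := (measure_union₀ hmeas hdisj).symm
      _ ≤ volume (A + B) := by
        refine measure_mono (union_subset ?_ ?_)
        · rintro _ ⟨k, hk, rfl⟩
          exact add_mem_add (hKA hk) hlB
        · rintro _ ⟨j, hj, rfl⟩
          exact add_mem_add hmA (hLB hj)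
  rw [hA.measure_eq_iSup_isCompact, hB.measure_eq_iSup_isCompact]
  simp only [iSup_and']
  exact ENNReal.biSup_add_biSup_le' ⟨∅, by simp⟩ ⟨∅, by simp⟩ volume_add_le_of_isCompact

theorem ofReal_mul_volume_add_le_volume_smul_add_smul {A B : Set ℝ} (hA : MeasurableSet A)
    (hB : MeasurableSet B) (hA_ne : A.Nonempty) (hB_ne : B.Nonempty) {a b : ℝ}
    (ha : 0 < a) (hb : 0 < b) :
    ENNReal.ofReal a * volume A + ENNReal.ofReal b * volume B ≤ volume (a • A + b • B) := by
  have := volume_add_volume_le_volume_add (hA.const_smul₀ a) (hB.const_smul₀ b)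
    hA_ne.smul_set hB_ne.smul_set
  simpa [Measure.addHaar_smul, abs_of_pos ha, abs_of_pos hb] using this

theorem volume_Ioi_inter_setOf_ofReal_lt (c : ℝ≥0∞) :
    volume (Ioi (0 : ℝ) ∩ {s | ENNReal.ofReal s < c}) = c := by
  induction c with
  | top => simp
  | coe c =>
    have : Ioi (0 : ℝ) ∩ {s | ENNReal.ofReal s < c} = Ioo 0 (c : ℝ) := by
      ext s
      refine and_congr_right fun hs => ?_
      exact ENNReal.ofReal_lt_iff_lt_toReal (le_of_lt hs) ENNReal.coe_ne_top
    simp [this]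

theorem lintegral_eq_lintegral_measure_ofReal_lt {α : Type*} [MeasurableSpace α] {μ : Measure α}
    [SFinite μ] {F : α → ℝ≥0∞} (hF : Measurable F) :
    ∫⁻ x, F x ∂μ = ∫⁻ s in Ioi (0 : ℝ), μ {x | ENNReal.ofReal s < F x} := by
  have hmeas : MeasurableSet {z : α × ℝ | ENNReal.ofReal z.2 < F z.1} :=
    measurableSet_lt (by fun_prop) (by fun_prop)
  calc ∫⁻ x, F x ∂μ
      = ∫⁻ x, volume.restrict (Ioi (0 : ℝ)) {s | ENNReal.ofReal s < F x} ∂μ := by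
        refine lintegral_congr fun x => ?_
        have hx : MeasurableSet {s : ℝ | ENNReal.ofReal s < F x} :=
          hmeas.preimage measurable_prodMk_left
        rw [Measure.restrict_apply hx, inter_comm, volume_Ioi_inter_setOf_ofReal_lt]
    _ = (μ.prod (volume.restrict (Ioi 0))) {z : α × ℝ | ENNReal.ofReal z.2 < F z.1} :=
        (Measure.prod_apply hmeas).symm
    _ = ∫⁻ s in Ioi (0 : ℝ), μ {x | ENNReal.ofReal s < F x} := Measure.prod_apply_symm hmeas

theorem ofReal_mul_lintegral_add_le_lintegral_of_min_le {F G H : ℝ → ℝ≥0∞} (hF : Measurable F)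
    (hG : Measurable G) (hH : Measurable H) (hsup : ⨆ x, F x = ⨆ x, G x) {a b : ℝ}
    (ha : 0 < a) (hb : 0 < b) (h : ∀ x y, min (F x) (G y) ≤ H (a * x + b * y)) :
    ENNReal.ofReal a * (∫⁻ x, F x) + ENNReal.ofReal b * (∫⁻ x, G x) ≤ ∫⁻ x, H x := by
  have measurable_superlevel (K : ℝ → ℝ≥0∞) :
      Measurable fun s : ℝ => volume {x | ENNReal.ofReal s < K x} :=
    Antitone.measurable fun s t hst =>
      measure_mono fun x hx => (ENNReal.ofReal_le_ofReal hst).trans_lt hx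
  rw [lintegral_eq_lintegral_measure_ofReal_lt hF, lintegral_eq_lintegral_measure_ofReal_lt hG,
    lintegral_eq_lintegral_measure_ofReal_lt hH,
    ← lintegral_const_mul _ (measurable_superlevel F),
    ← lintegral_const_mul _ (measurable_superlevel G),
    ← lintegral_add_left ((measurable_superlevel F).const_mul _)]
  refine lintegral_mono fun s => ?_
  set σ := ENNReal.ofReal s
  rcases lt_or_ge σ (⨆ x, F x) with hσ | hσ
  · have hF_ne : {x | σ < F x}.Nonempty := lt_iSup_iff.1 hσ
    have hG_ne : {x | σ < G x}.Nonempty := lt_iSup_iff.1 (hσ.trans_eq hsup)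
    calc ENNReal.ofReal a * volume {x | σ < F x} + ENNReal.ofReal b * volume {x | σ < G x}
        ≤ volume (a • {x | σ < F x} + b • {x | σ < G x}) :=
          ofReal_mul_volume_add_le_volume_smul_add_smul (measurableSet_lt measurable_const hF)
            (measurableSet_lt measurable_const hG) hF_ne hG_ne ha hb
      _ ≤ volume {x | σ < H x} := by
          refine measure_mono ?_
          rintro _ ⟨_, ⟨x, hx, rfl⟩, _, ⟨y, hy, rfl⟩, rfl⟩
          exact (lt_min hx hy).trans_le (h x y)
  · have superlevel_eq_empty {K : ℝ → ℝ≥0∞} (hK : ⨆ x, K x ≤ σ) : {x | σ < K x} = ∅ :=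
      eq_empty_of_forall_notMem fun x hx => (hx.trans_le ((le_iSup K x).trans hK)).false
    simp [superlevel_eq_empty hσ, superlevel_eq_empty (hsup.symm.trans_le hσ)]

end OneDimensional

section ENNRealPowers

theorem rpow_mul_rpow_le_ofReal_mul_add {a b : ℝ} (ha : 0 < a) (hb : 0 < b)
    (hab : a + b = 1) (x y : ℝ≥0∞) :
    x ^ a * y ^ b ≤ ENNReal.ofReal a * x + ENNReal.ofReal b * y := by
  induction x with
  | top => simp [ENNReal.mul_top, ha]
  | coe x =>
    induction y with
    | top => simp [ENNReal.mul_top, hb]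
    | coe y =>
      have := NNReal.geom_mean_le_arith_mean2_weighted ⟨a, ha.le⟩ ⟨b, hb.le⟩ x y
        (by ext; exact hab)
      rw [← ENNReal.coe_rpow_of_nonneg _ ha.le, ← ENNReal.coe_rpow_of_nonneg _ hb.le,
        ENNReal.ofReal_eq_coe_nnreal ha.le, ENNReal.ofReal_eq_coe_nnreal hb.le]
      exact_mod_cast this

theorem rpow_neg_le_of_rpow_mul_rpow_le {a b q : ℝ} (ha : 0 < a) (hb : 0 < b) (hab : a + b = 1)
    (hq : 0 < q) {x y z : ℝ≥0∞} (h : x ^ a * y ^ b ≤ z) :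
    z ^ (-q) ≤ ENNReal.ofReal a * x ^ (-q) + ENNReal.ofReal b * y ^ (-q) := by
  rcases eq_or_ne x 0 with rfl | hx
  · simp [ENNReal.mul_top, ha, hq]
  rcases eq_or_ne y 0 with rfl | hy
  · simp [ENNReal.mul_top, hb, hq]
  have hxa : x ^ a ≠ 0 := by simp [hx, ha.le]
  have hyb : y ^ b ≠ 0 := by simp [hy, hb.le]
  calc z ^ (-q) ≤ (x ^ a * y ^ b) ^ (-q) := by
        simp only [ENNReal.rpow_neg]
        gcongr
    _ = (x ^ (-q)) ^ a * (y ^ (-q)) ^ b := by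
        rw [ENNReal.mul_rpow_of_ne_zero hxa hyb]
        simp only [← ENNReal.rpow_mul, mul_comm]
    _ ≤ ENNReal.ofReal a * x ^ (-q) + ENNReal.ofReal b * y ^ (-q) :=
        rpow_mul_rpow_le_ofReal_mul_add ha hb hab _ _

theorem mul_rpow_neg_add_le_rpow_mul_rpow {q : ℝ} (hq₀ : 0 < q) (hq₁ : q < 1) (v w : ℝ≥0∞)
    {I J M N : ℝ≥0∞} (hI : I ≠ 0) (hI' : I ≠ ∞) (hJ : J ≠ 0) (hJ' : J ≠ ∞) (hM : M ≠ 0)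
    (hM' : M ≠ ∞) (hN : N ≠ 0) (hN' : N ≠ ∞) :
    v * M ^ (-q) + w * N ^ (-q) ≤ (v * (I / M) + w * (J / N)) ^ q *
      (v * I ^ (-(q / (1 - q))) + w * J ^ (-(q / (1 - q)))) ^ (1 - q) := by
  have hq : 0 < 1 - q := sub_pos.2 hq₁
  have holder := ENNReal.inner_le_weight_mul_Lp_of_nonneg Finset.univ (p := (1 - q)⁻¹)
    (one_le_inv_iff₀.2 ⟨hq, by linarith⟩) ![v * (I / M), w * (J / N)]
    ![M ^ (1 - q) * I⁻¹, N ^ (1 - q) * J⁻¹]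
  have summand_eq {u I M : ℝ≥0∞} (hI : I ≠ 0) (hI' : I ≠ ∞) (hM : M ≠ 0) (hM' : M ≠ ∞) :
      u * (I / M) * (M ^ (1 - q) * I⁻¹) = u * M ^ (-q) := by
    calc u * (I / M) * (M ^ (1 - q) * I⁻¹) = u * (M ^ (1 - q) * M⁻¹) * (I * I⁻¹) := by
          rw [div_eq_mul_inv]; ring
      _ = u * M ^ (-q) := by
          rw [ENNReal.mul_inv_cancel hI hI', mul_one, ← ENNReal.rpow_neg_one,
            ← ENNReal.rpow_add _ _ hM hM']
          ring_nf
  have summand_rpow_eq {u I M : ℝ≥0∞} (hI : I ≠ 0) (hI' : I ≠ ∞) (hM : M ≠ 0) (hM' : M ≠ ∞) :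
      u * (I / M) * (M ^ (1 - q) * I⁻¹) ^ (1 - q)⁻¹ = u * I ^ (-(q / (1 - q))) := by
    calc u * (I / M) * (M ^ (1 - q) * I⁻¹) ^ (1 - q)⁻¹
        = u * (I * I⁻¹ ^ (1 - q)⁻¹) * (M * M⁻¹) := by
          rw [ENNReal.mul_rpow_of_nonneg _ _ (inv_nonneg.2 hq.le), ENNReal.rpow_rpow_inv hq.ne',
            div_eq_mul_inv]
          ring
      _ = u * I ^ (-(q / (1 - q))) := by
          have : -(q / (1 - q)) = 1 + -(1 - q)⁻¹ := by field_simp; ring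
          rw [ENNReal.mul_inv_cancel hM hM', mul_one, ENNReal.inv_rpow, ← ENNReal.rpow_neg, this,
            ENNReal.rpow_add _ _ hI hI', ENNReal.rpow_one]
  simpa [summand_eq, summand_rpow_eq, hI, hI', hJ, hJ', hM, hM', hN, hN'] using holder

end ENNRealPowers

section BorellBrascampLieb

theorem min_div_le_mul_rpow_of_rpow_neg_le {a b q : ℝ} (ha : 0 < a) (hq : 0 < q)
    {x y z M N : ℝ≥0∞} (hM : M ≠ 0) (hM' : M ≠ ∞) (hN : N ≠ 0) (hN' : N ≠ ∞)
    (h : z ^ (-q) ≤ ENNReal.ofReal a * x ^ (-q) + ENNReal.ofReal b * y ^ (-q)) :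
    min (x / M) (y / N) ≤
      z * (ENNReal.ofReal a * M ^ (-q) + ENNReal.ofReal b * N ^ (-q)) ^ q⁻¹ := by
  set D := ENNReal.ofReal a * M ^ (-q) + ENNReal.ofReal b * N ^ (-q) with hD_def
  have hD : D ≠ 0 := by simp [hD_def, ha, hM, hM', hq.le, hq]
  have hD' : D ≠ ∞ := by simp [hD_def, ENNReal.mul_eq_top, hM, hM', hN, hN', hq]
  set s := min (x / M) (y / N)
  rcases eq_or_ne s 0 with hs | hs
  · simp [hs]
  have hsM : s * M ≤ x := ENNReal.mul_le_of_le_div (min_le_left _ _)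
  have hsN : s * N ≤ y := ENNReal.mul_le_of_le_div (min_le_right _ _)
  have inv_rpow_le : (z ^ q)⁻¹ ≤ (s ^ q)⁻¹ * D := by
    calc (z ^ q)⁻¹ ≤ ENNReal.ofReal a * x ^ (-q) + ENNReal.ofReal b * y ^ (-q) := by
          simpa only [ENNReal.rpow_neg] using h
      _ ≤ ENNReal.ofReal a * (s * M) ^ (-q) + ENNReal.ofReal b * (s * N) ^ (-q) := by
          simp only [ENNReal.rpow_neg]
          gcongr
      _ = (s ^ q)⁻¹ * D := by
          rw [ENNReal.mul_rpow_of_ne_zero hs hM, ENNReal.mul_rpow_of_ne_zero hs hN, hD_def,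
            ENNReal.rpow_neg s]
          ring
  refine (ENNReal.rpow_le_rpow_iff hq).1 ?_
  rwa [ENNReal.mul_rpow_of_nonneg _ _ hq.le, ENNReal.rpow_inv_rpow hq.ne',
    ← ENNReal.div_le_iff_le_mul (.inl hD) (.inl hD'), ← ENNReal.inv_le_inv, div_eq_mul_inv,
    ENNReal.mul_inv (.inr (ENNReal.inv_ne_top.2 hD)) (.inr (ENNReal.inv_ne_zero.2 hD')), inv_inv]

theorem lintegral_div_iSup_add_le_of_rpow_neg_le {F G H : ℝ → ℝ≥0∞} (hF : Measurable F)
    (hG : Measurable G) (hH : Measurable H) (hM : ⨆ x, F x ≠ 0) (hM' : ⨆ x, F x ≠ ∞)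
    (hN : ⨆ x, G x ≠ 0) (hN' : ⨆ x, G x ≠ ∞) {a b q : ℝ} (ha : 0 < a) (hb : 0 < b) (hq : 0 < q)
    (h : ∀ x y, H (a * x + b * y) ^ (-q) ≤
      ENNReal.ofReal a * F x ^ (-q) + ENNReal.ofReal b * G y ^ (-q)) :
    ENNReal.ofReal a * ((∫⁻ x, F x) / ⨆ x, F x) + ENNReal.ofReal b * ((∫⁻ x, G x) / ⨆ x, G x) ≤
      (∫⁻ x, H x) * (ENNReal.ofReal a * (⨆ x, F x) ^ (-q) +
        ENNReal.ofReal b * (⨆ x, G x) ^ (-q)) ^ q⁻¹ := by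
  set M := ⨆ x, F x
  set N := ⨆ x, G x
  set D := ENNReal.ofReal a * M ^ (-q) + ENNReal.ofReal b * N ^ (-q)
  have hsup : ⨆ x, F x / M = ⨆ x, G x / N := by
    rw [← ENNReal.iSup_div, ← ENNReal.iSup_div, ENNReal.div_self hM hM', ENNReal.div_self hN hN']
  have hmin (x y : ℝ) : min (F x / M) (G y / N) ≤ H (a * x + b * y) * D ^ q⁻¹ :=
    min_div_le_mul_rpow_of_rpow_neg_le ha hq hM hM' hN hN' (h x y)
  simpa only [div_eq_mul_inv, lintegral_mul_const _ hF, lintegral_mul_const _ hG,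
    lintegral_mul_const _ hH] using ofReal_mul_lintegral_add_le_lintegral_of_min_le
    (hF.div_const M) (hG.div_const N) (hH.mul_const _) hsup ha hb hmin

theorem rpow_neg_le_of_mul_div_add_le {a b q : ℝ} (ha : 0 < a) (hb : 0 < b) (hq₀ : 0 < q)
    (hq₁ : q < 1) {I J M N S : ℝ≥0∞} (hI : I ≠ 0) (hJ : J ≠ 0) (hM : M ≠ 0) (hM' : M ≠ ∞)
    (hN : N ≠ 0) (hN' : N ≠ ∞)
    (h : ENNReal.ofReal a * (I / M) + ENNReal.ofReal b * (J / N) ≤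
      S * (ENNReal.ofReal a * M ^ (-q) + ENNReal.ofReal b * N ^ (-q)) ^ q⁻¹) :
    S ^ (-(q / (1 - q))) ≤
      ENNReal.ofReal a * I ^ (-(q / (1 - q))) + ENNReal.ofReal b * J ^ (-(q / (1 - q))) := by
  have hq : 0 < 1 - q := sub_pos.2 hq₁
  rcases eq_or_ne S ∞ with rfl | hS
  · simp [div_pos hq₀ hq]
  set D := ENNReal.ofReal a * M ^ (-q) + ENNReal.ofReal b * N ^ (-q) with hD_def
  set T := ENNReal.ofReal a * I ^ (-(q / (1 - q))) + ENNReal.ofReal b * J ^ (-(q / (1 - q)))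
  have hD : D ≠ 0 := by simp [hD_def, ha, hM, hM', hq₀.le, hq₀]
  have hD' : D ≠ ∞ := by simp [hD_def, ENNReal.mul_eq_top, hM, hM', hN, hN', hq₀]
  have h' : ENNReal.ofReal a * (I / M) + ENNReal.ofReal b * (J / N) ≠ ∞ :=
    ne_top_of_le_ne_top (by finiteness) h
  have hI' : I ≠ ∞ := by
    rintro rfl
    simp [ENNReal.top_div, ENNReal.mul_top, ha, hM'] at h'
  have hJ' : J ≠ ∞ := by
    rintro rfl
    simp [ENNReal.top_div, ENNReal.mul_top, hb, hN'] at h'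
  have hST : 1 ≤ S ^ q * T ^ (1 - q) := by
    refine (ENNReal.mul_le_mul_iff_right hD hD').1 ?_
    calc D * 1 = D := mul_one D
      _ ≤ (ENNReal.ofReal a * (I / M) + ENNReal.ofReal b * (J / N)) ^ q * T ^ (1 - q) :=
          mul_rpow_neg_add_le_rpow_mul_rpow hq₀ hq₁ _ _ hI hI' hJ hJ' hM hM' hN hN'
      _ ≤ (S * D ^ q⁻¹) ^ q * T ^ (1 - q) := by gcongr
      _ = D * (S ^ q * T ^ (1 - q)) := by
          rw [ENNReal.mul_rpow_of_nonneg _ _ hq₀.le, ENNReal.rpow_inv_rpow hq₀.ne']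
          ring
  have hST' : S ^ (-q) ≤ T ^ (1 - q) := by
    calc S ^ (-q) ≤ S ^ (-q) * (S ^ q * T ^ (1 - q)) := le_mul_of_one_le_right' hST
      _ = (S ^ q)⁻¹ * S ^ q * T ^ (1 - q) := by rw [ENNReal.rpow_neg, mul_assoc]
      _ ≤ T ^ (1 - q) := mul_le_of_le_one_left' (ENNReal.inv_mul_le_one _)
  calc S ^ (-(q / (1 - q))) = (S ^ (-q)) ^ (1 - q)⁻¹ := by
        rw [← ENNReal.rpow_mul, neg_mul, div_eq_mul_inv]
    _ ≤ T := (ENNReal.rpow_inv_le_iff hq).2 hST'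

theorem tendsto_lintegral_min_natCast {α : Type*} [MeasurableSpace α] {μ : Measure α}
    {F : α → ℝ≥0∞} (hF : Measurable F) :
    Tendsto (fun n : ℕ => ∫⁻ x, min (F x) n ∂μ) atTop (𝓝 (∫⁻ x, F x ∂μ)) := by
  refine lintegral_tendsto_of_tendsto_of_monotone
    (fun n => (hF.min measurable_const).aemeasurable) (.of_forall fun x m n hmn => ?_)
    (.of_forall fun x => ?_)
  · exact min_le_min le_rfl (by exact_mod_cast hmn)
  · simpa using tendsto_const_nhds.min ENNReal.tendsto_nat_nhds_top

theorem lintegral_rpow_neg_le_of_le {F G H : ℝ → ℝ≥0∞} (hF : Measurable F) (hG : Measurable G)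
    (hH : Measurable H) {C : ℝ≥0∞} (hC : C ≠ ∞) (hFC : ∀ x, F x ≤ C) (hGC : ∀ x, G x ≤ C)
    {a b q : ℝ} (ha : 0 < a) (hb : 0 < b) (hq₀ : 0 < q) (hq₁ : q < 1)
    (h : ∀ x y, H (a * x + b * y) ^ (-q) ≤
      ENNReal.ofReal a * F x ^ (-q) + ENNReal.ofReal b * G y ^ (-q)) :
    (∫⁻ x, H x) ^ (-(q / (1 - q))) ≤ ENNReal.ofReal a * (∫⁻ x, F x) ^ (-(q / (1 - q))) +
      ENNReal.ofReal b * (∫⁻ x, G x) ^ (-(q / (1 - q))) := by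
  have he : 0 < q / (1 - q) := div_pos hq₀ (sub_pos.2 hq₁)
  rcases eq_or_ne (∫⁻ x, F x) 0 with hI | hI
  · simp [hI, he, ha, ENNReal.mul_top]
  rcases eq_or_ne (∫⁻ x, G x) 0 with hJ | hJ
  · simp [hJ, he, hb, ENNReal.mul_top]
  have iSup_ne_zero {K : ℝ → ℝ≥0∞} (hK : ∫⁻ x, K x ≠ 0) : ⨆ x, K x ≠ 0 := fun h₀ =>
    hK (by simp [ENNReal.iSup_eq_zero.1 h₀])
  have iSup_ne_top {K : ℝ → ℝ≥0∞} (hK : ∀ x, K x ≤ C) : ⨆ x, K x ≠ ∞ :=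
    ne_top_of_le_ne_top hC (iSup_le hK)
  exact rpow_neg_le_of_mul_div_add_le ha hb hq₀ hq₁ hI hJ (iSup_ne_zero hI) (iSup_ne_top hFC)
    (iSup_ne_zero hJ) (iSup_ne_top hGC)
    (lintegral_div_iSup_add_le_of_rpow_neg_le hF hG hH (iSup_ne_zero hI) (iSup_ne_top hFC)
      (iSup_ne_zero hJ) (iSup_ne_top hGC) ha hb hq₀ h)

theorem lintegral_rpow_neg_le {F G H : ℝ → ℝ≥0∞} (hF : Measurable F) (hG : Measurable G)
    (hH : Measurable H) {a b q : ℝ} (ha : 0 < a) (hb : 0 < b) (hq₀ : 0 < q) (hq₁ : q < 1)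
    (h : ∀ x y, H (a * x + b * y) ^ (-q) ≤
      ENNReal.ofReal a * F x ^ (-q) + ENNReal.ofReal b * G y ^ (-q)) :
    (∫⁻ x, H x) ^ (-(q / (1 - q))) ≤ ENNReal.ofReal a * (∫⁻ x, F x) ^ (-(q / (1 - q))) +
      ENNReal.ofReal b * (∫⁻ x, G x) ^ (-(q / (1 - q))) := by
  have hlim {K : ℝ → ℝ≥0∞} (hK : Measurable K) (w : ℝ) :
      Tendsto (fun n : ℕ => ENNReal.ofReal w * (∫⁻ x, min (K x) n) ^ (-(q / (1 - q)))) atTop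
        (𝓝 (ENNReal.ofReal w * (∫⁻ x, K x) ^ (-(q / (1 - q))))) :=
    ENNReal.Tendsto.const_mul ((ENNReal.continuous_rpow_const.tendsto _).comp
      (tendsto_lintegral_min_natCast hK)) (.inr ENNReal.ofReal_ne_top)
  refine ge_of_tendsto' ((hlim hF a).add (hlim hG b)) fun n => ?_
  refine lintegral_rpow_neg_le_of_le (hF.min measurable_const) (hG.min measurable_const) hH
    (ENNReal.natCast_ne_top n) (fun x => min_le_right _ _) (fun x => min_le_right _ _)
    ha hb hq₀ hq₁ fun x y => (h x y).trans ?_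
  simp only [ENNReal.rpow_neg]
  gcongr <;> exact min_le_left _ _

theorem inv_lintegral_le_of_rpow_neg_half_le {F G H : ℝ → ℝ≥0∞} (hF : Measurable F)
    (hG : Measurable G) (hH : Measurable H) {a b : ℝ} (ha : 0 < a) (hb : 0 < b)
    (h : ∀ x y, H (a * x + b * y) ^ (-(1 / 2) : ℝ) ≤
      ENNReal.ofReal a * F x ^ (-(1 / 2) : ℝ) + ENNReal.ofReal b * G y ^ (-(1 / 2) : ℝ)) :
    (∫⁻ x, H x)⁻¹ ≤
      ENNReal.ofReal a * (∫⁻ x, F x)⁻¹ + ENNReal.ofReal b * (∫⁻ x, G x)⁻¹ := by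
  have exponent_eq : (1 / 2 / (1 - 1 / 2) : ℝ) = 1 := by norm_num
  simpa only [exponent_eq, ENNReal.rpow_neg_one] using
    lintegral_rpow_neg_le hF hG hH ha hb (by norm_num) (by norm_num) h

end BorellBrascampLieb

section PrekopaLeindler

/-- The measure `μ` on a real vector space satisfies the Prékopa–Leindler inequality for all
measurable functions. Naming the property lets it pass from `ℝ` to products and linear images. -/
def SatisfiesPrekopaLeindler {E : Type*} [AddCommGroup E] [Module ℝ E] [MeasurableSpace E]
    (μ : Measure E) : Prop :=
  ∀ ⦃F G H : E → ℝ≥0∞⦄, Measurable F → Measurable G → Measurable H → ∀ ⦃a b : ℝ⦄,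
    0 < a → 0 < b → a + b = 1 → (∀ x y, F x ^ a * G y ^ b ≤ H (a • x + b • y)) →
      (∫⁻ x, F x ∂μ) ^ a * (∫⁻ x, G x ∂μ) ^ b ≤ ∫⁻ x, H x ∂μ

theorem rpow_mul_rpow_le_lintegral_of_lt {F G H : ℝ → ℝ≥0∞} (hF : Measurable F)
    (hG : Measurable G) (hH : Measurable H) {a b : ℝ} (ha : 0 < a) (hb : 0 < b) (hab : a + b = 1)
    (h : ∀ x y, F x ^ a * G y ^ b ≤ H (a • x + b • y)) {c d : ℝ≥0∞}
    (hc : c < ∫⁻ x, F x) (hd : d < ∫⁻ x, G x) :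
    c ^ a * d ^ b ≤ ∫⁻ x, H x := by
  rcases eq_or_ne c 0 with rfl | hc₀
  · simp [ha]
  rcases eq_or_ne d 0 with rfl | hd₀
  · simp [hb]
  set m := c ^ a * d ^ b
  have hca₀ : c ^ a ≠ 0 := by simp [hc₀, ha.le]
  have hca : c ^ a ≠ ∞ := ENNReal.rpow_ne_top_of_nonneg ha.le hc.ne_top
  have normalized_le (x y : ℝ) : (F x / c) ^ a * (G y / d) ^ b ≤ H (a * x + b * y) / m := by
    calc (F x / c) ^ a * (G y / d) ^ b = F x ^ a * G y ^ b / m := by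
          rw [ENNReal.div_rpow_of_nonneg _ _ ha.le, ENNReal.div_rpow_of_nonneg _ _ hb.le,
            ENNReal.mul_div_mul_comm (.inl hca₀) (.inl hca)]
      _ ≤ H (a * x + b * y) / m := by gcongr; exact h x y
  have harmonic := inv_lintegral_le_of_rpow_neg_half_le (hF.div_const c) (hG.div_const d)
    (hH.div_const m) ha hb fun x y =>
      rpow_neg_le_of_rpow_mul_rpow_le ha hb hab (by norm_num) (normalized_le x y)
  have lintegral_div {K : ℝ → ℝ≥0∞} (hK : Measurable K) (k : ℝ≥0∞) :
      ∫⁻ x, K x / k = (∫⁻ x, K x) / k := by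
    simp only [div_eq_mul_inv, lintegral_mul_const _ hK]
  have inv_le_one {I k : ℝ≥0∞} (hk₀ : k ≠ 0) (hk : k < I) : (I / k)⁻¹ ≤ 1 := by
    rw [ENNReal.inv_le_one, ENNReal.le_div_iff_mul_le (.inl hk₀) (.inl hk.ne_top), one_mul]
    exact hk.le
  have normalized_inv_le_one : ((∫⁻ x, H x) / m)⁻¹ ≤ 1 := by
    rw [lintegral_div hF, lintegral_div hG, lintegral_div hH] at harmonic
    calc ((∫⁻ x, H x) / m)⁻¹ ≤ ENNReal.ofReal a * 1 + ENNReal.ofReal b * 1 := by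
          refine harmonic.trans ?_
          gcongr
          exacts [inv_le_one hc₀ hc, inv_le_one hd₀ hd]
      _ = 1 := by rw [mul_one, mul_one, ← ENNReal.ofReal_add ha.le hb.le, hab, ENNReal.ofReal_one]
  simpa only [one_mul] using ENNReal.mul_le_of_le_div (ENNReal.inv_le_one.1 normalized_inv_le_one)

theorem satisfiesPrekopaLeindler_volume_real :
    SatisfiesPrekopaLeindler (volume : Measure ℝ) := by
  intro F G H hF hG hH a b ha hb hab h
  refine ENNReal.mul_le_of_forall_lt fun u hu v hv => ?_
  have := rpow_mul_rpow_le_lintegral_of_lt hF hG hH ha hb hab h (c := u ^ a⁻¹) (d := v ^ b⁻¹)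
    ((ENNReal.rpow_inv_lt_iff ha).2 hu) ((ENNReal.rpow_inv_lt_iff hb).2 hv)
  rwa [ENNReal.rpow_inv_rpow ha.ne', ENNReal.rpow_inv_rpow hb.ne'] at this

variable {E E' : Type*} [AddCommGroup E] [Module ℝ E] [MeasurableSpace E]
  [AddCommGroup E'] [Module ℝ E'] [MeasurableSpace E'] {μ : Measure E} {ν : Measure E'}

theorem SatisfiesPrekopaLeindler.prod [SFinite ν] (hμ : SatisfiesPrekopaLeindler μ)
    (hν : SatisfiesPrekopaLeindler ν) : SatisfiesPrekopaLeindler (μ.prod ν) := by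
  intro F G H hF hG hH a b ha hb hab h
  simp only [lintegral_prod _ hF.aemeasurable, lintegral_prod _ hG.aemeasurable,
    lintegral_prod _ hH.aemeasurable]
  refine hμ hF.lintegral_prod_right' hG.lintegral_prod_right' hH.lintegral_prod_right'
    ha hb hab fun x y => ?_
  exact hν (hF.comp measurable_prodMk_left) (hG.comp measurable_prodMk_left)
    (hH.comp measurable_prodMk_left) ha hb hab fun u v => h (x, u) (y, v)

theorem SatisfiesPrekopaLeindler.map (hν : SatisfiesPrekopaLeindler ν) (f : E' →ₗ[ℝ] E)
    (hf : Measurable f) : SatisfiesPrekopaLeindler (ν.map f) := by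
  intro F G H hF hG hH a b ha hb hab h
  simp only [lintegral_map hF hf, lintegral_map hG hf, lintegral_map hH hf]
  refine hν (hF.comp hf) (hG.comp hf) (hH.comp hf) ha hb hab fun x y => ?_
  simpa using h (f x) (f y)

theorem satisfiesPrekopaLeindler_of_subsingleton [Subsingleton E] :
    SatisfiesPrekopaLeindler μ := by
  intro F G H _ _ _ a b ha hb hab h
  have lintegral_eq (K : E → ℝ≥0∞) : ∫⁻ x, K x ∂μ = K 0 * μ univ := by
    rw [lintegral_congr fun x => congrArg K (Subsingleton.elim x 0), lintegral_const]
  calc (∫⁻ x, F x ∂μ) ^ a * (∫⁻ x, G x ∂μ) ^ b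
      = F 0 ^ a * G 0 ^ b * (μ univ ^ a * μ univ ^ b) := by
        rw [lintegral_eq, lintegral_eq, ENNReal.mul_rpow_of_nonneg _ _ ha.le,
          ENNReal.mul_rpow_of_nonneg _ _ hb.le]
        ring
    _ = F 0 ^ a * G 0 ^ b * μ univ := by
        rw [← ENNReal.rpow_add_of_nonneg _ _ ha.le hb.le, hab, ENNReal.rpow_one]
    _ ≤ H 0 * μ univ := by gcongr; simpa using h 0 0
    _ = ∫⁻ x, H x ∂μ := (lintegral_eq H).symm

end PrekopaLeindler

section Haar

variable {E : Type*} [NormedAddCommGroup E] [NormedSpace ℝ E] [FiniteDimensional ℝ E]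
  [MeasurableSpace E] [BorelSpace E]

theorem exists_equiv_prod_ker_measurePreserving (μ : Measure E) [μ.IsAddHaarMeasure]
    {ℓ : E →L[ℝ] ℝ} (hℓ : ℓ ≠ 0) :
    ∃ (e : E ≃L[ℝ] ℝ × ℓ.ker) (ν : Measure ℓ.ker), ν.IsAddHaarMeasure ∧
      (∀ x, (e x).1 = ℓ x) ∧ MeasurePreserving e μ (volume.prod ν) := by
  obtain ⟨w, hw⟩ : ∃ w, ℓ w ≠ 0 := by
    contrapose! hℓ
    exact ContinuousLinearMap.ext hℓ
  have right_inverse : Function.RightInverse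
      (ContinuousLinearMap.toSpanSingleton ℝ ((ℓ w)⁻¹ • w)) ℓ := fun r => by simp [hw]
  let e := ContinuousLinearEquiv.equivOfRightInverse ℓ _ right_inverse
  let ν : Measure ℓ.ker := Measure.addHaar
  have map_isAddHaar : (μ.map e).IsAddHaarMeasure := e.isAddHaarMeasure_map μ
  obtain ⟨c, hc₀, hc, hμ⟩ : ∃ c : ℝ≥0∞, c ≠ 0 ∧ c ≠ ∞ ∧ μ.map e = c • (volume.prod ν) :=
    ⟨_, by simpa using (Measure.addHaarScalarFactor_pos_of_isAddHaarMeasure _ _).ne',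
      ENNReal.coe_ne_top, Measure.isAddLeftInvariant_eq_smul _ _⟩
  refine ⟨e, c • ν, Measure.IsAddHaarMeasure.smul ν hc₀ hc, fun _ => rfl,
    e.continuous.measurable, ?_⟩
  rw [hμ, Measure.prod_smul_right]

theorem satisfiesPrekopaLeindler_of_isAddHaarMeasure (μ : Measure E) [μ.IsAddHaarMeasure] :
    SatisfiesPrekopaLeindler μ := by
  induction hn : Module.finrank ℝ E generalizing E with
  | zero =>
    have : Subsingleton E := Module.finrank_zero_iff.1 hn
    exact satisfiesPrekopaLeindler_of_subsingleton
  | succ n ih =>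
    have : Nontrivial E := Module.nontrivial_of_finrank_pos (R := ℝ) (by lia)
    obtain ⟨ℓ, hℓ⟩ := exists_ne (0 : E →L[ℝ] ℝ)
    obtain ⟨e, ν, hν, -, he⟩ := exists_equiv_prod_ker_measurePreserving μ hℓ
    have finrank_ker : Module.finrank ℝ ℓ.ker = n := by
      have := e.toLinearEquiv.finrank_eq
      rw [Module.finrank_prod, Module.finrank_self, hn] at this
      lia
    have hμ : (volume.prod ν).map e.symm = μ :=
      (he.symm e.toHomeomorph.toMeasurableEquiv).map_eq
    rw [← hμ]
    exact (satisfiesPrekopaLeindler_volume_real.prod (ih ν finrank_ker)).map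
      e.symm.toLinearEquiv.toLinearMap e.symm.continuous.measurable

end Haar

section Inversion

/-- The integrand that `A` becomes under the substitution `r = x⁻¹` on the positive half-line,
extended by zero to the whole line. -/
noncomputable def inversionPullback (A : ℝ → ℝ≥0∞) : ℝ → ℝ≥0∞ :=
  (Ioi 0).indicator fun x => ENNReal.ofReal (x ^ 2)⁻¹ * A x⁻¹

theorem measurable_inversionPullback {A : ℝ → ℝ≥0∞} (hA : Measurable A) :
    Measurable (inversionPullback A) :=
  (Measurable.mul (by fun_prop) (by fun_prop)).indicator measurableSet_Ioi

theorem lintegral_inversionPullback (A : ℝ → ℝ≥0∞) :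
    ∫⁻ x, inversionPullback A x = ∫⁻ r in Ioi 0, A r := by
  have image_inv : (fun x : ℝ => x⁻¹) '' Ioi 0 = Ioi 0 := by
    ext x
    simp
  have change_of_variables := lintegral_image_eq_lintegral_abs_deriv_mul measurableSet_Ioi
    (fun x (hx : (0 : ℝ) < x) => (hasDerivAt_inv hx.ne').hasDerivWithinAt)
    inv_injective.injOn A
  rw [image_inv] at change_of_variables
  simpa [inversionPullback, lintegral_indicator measurableSet_Ioi] using change_of_variables.symm

theorem inversionPullback_rpow_neg_half_of_pos (A : ℝ → ℝ≥0∞) {x : ℝ} (hx : 0 < x) :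
    inversionPullback A x ^ (-(1 / 2) : ℝ) = ENNReal.ofReal x * A x⁻¹ ^ (-(1 / 2) : ℝ) := by
  have sqrt_weight : ENNReal.ofReal (x ^ 2)⁻¹ ^ (1 / 2 : ℝ) = (ENNReal.ofReal x)⁻¹ := by
    rw [ENNReal.ofReal_rpow_of_pos (by positivity), ← Real.sqrt_eq_rpow, Real.sqrt_inv,
      Real.sqrt_sq hx.le, ENNReal.ofReal_inv_of_pos hx]
  rw [inversionPullback, indicator_of_mem (mem_Ioi.2 hx), ENNReal.rpow_neg, ENNReal.rpow_neg,
    ENNReal.mul_rpow_of_nonneg _ _ (by norm_num), sqrt_weight,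
    ENNReal.mul_inv (by simp) (by simp [hx]), inv_inv]

theorem inversionPullback_of_nonpos (A : ℝ → ℝ≥0∞) {x : ℝ} (hx : x ≤ 0) :
    inversionPullback A x = 0 :=
  indicator_of_notMem (notMem_Ioi.2 hx) _

theorem inv_lintegral_Ioi_le_of_harmonic {A B C : ℝ → ℝ≥0∞} (hA : Measurable A)
    (hB : Measurable B) (hC : Measurable C) {a b : ℝ} (ha : 0 < a) (hb : 0 < b) (hab : a + b = 1)
    (h : ∀ r s, 0 < r → 0 < s → ∀ θ η : ℝ, 0 < θ → 0 < η → θ + η = 1 → θ * b * r = η * a * s →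
      A r ^ θ * B s ^ η ≤ C (θ * r + η * s)) :
    (∫⁻ r in Ioi 0, C r)⁻¹ ≤ ENNReal.ofReal a * (∫⁻ r in Ioi 0, A r)⁻¹ +
      ENNReal.ofReal b * (∫⁻ r in Ioi 0, B r)⁻¹ := by
  simp only [← lintegral_inversionPullback]
  refine inv_lintegral_le_of_rpow_neg_half_le (measurable_inversionPullback hA)
    (measurable_inversionPullback hB) (measurable_inversionPullback hC) ha hb fun x y => ?_
  rcases le_or_gt x 0 with hx | hx
  · simp [inversionPullback_of_nonpos A hx, ENNReal.mul_top, ha]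
  rcases le_or_gt y 0 with hy | hy
  · simp [inversionPullback_of_nonpos B hy, ENNReal.mul_top, hb]
  set z := a * x + b * y with hz_def
  have hz : 0 < z := by positivity
  set θ := a * x / z
  set η := b * y / z
  have hθ : 0 < θ := by positivity
  have hη : 0 < η := by positivity
  have hθη : θ + η = 1 := by rw [← add_div, ← hz_def, div_self hz.ne']
  have hzθ : z * θ = a * x := mul_div_cancel₀ _ hz.ne'
  have hzη : z * η = b * y := mul_div_cancel₀ _ hz.ne'
  have slices : A x⁻¹ ^ θ * B y⁻¹ ^ η ≤ C z⁻¹ := by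
    have harmonic_mean : θ * x⁻¹ + η * y⁻¹ = z⁻¹ := by
      simp only [θ, η]
      field_simp
      exact hab
    rw [← harmonic_mean]
    refine h _ _ (inv_pos.2 hx) (inv_pos.2 hy) θ η hθ hη hθη ?_
    simp only [θ, η]
    field_simp
  rw [inversionPullback_rpow_neg_half_of_pos A hx, inversionPullback_rpow_neg_half_of_pos B hy,
    inversionPullback_rpow_neg_half_of_pos C hz]
  calc ENNReal.ofReal z * C z⁻¹ ^ (-(1 / 2) : ℝ)
      ≤ ENNReal.ofReal z * (ENNReal.ofReal θ * A x⁻¹ ^ (-(1 / 2) : ℝ) +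
          ENNReal.ofReal η * B y⁻¹ ^ (-(1 / 2) : ℝ)) := by
        gcongr
        exact rpow_neg_le_of_rpow_mul_rpow_le hθ hη hθη (by norm_num) slices
    _ = ENNReal.ofReal a * (ENNReal.ofReal x * A x⁻¹ ^ (-(1 / 2) : ℝ)) +
          ENNReal.ofReal b * (ENNReal.ofReal y * B y⁻¹ ^ (-(1 / 2) : ℝ)) := by
        simp only [mul_add, ← mul_assoc, ← ENNReal.ofReal_mul hz.le, hzθ, hzη,
          ENNReal.ofReal_mul ha.le, ENNReal.ofReal_mul hb.le]

end Inversion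

section HalfSpace

theorem exists_measurable_ge_ae_eq {α : Type*} [MeasurableSpace α] {μ : Measure α}
    {K : α → ℝ≥0∞} (hK : AEMeasurable K μ) :
    ∃ K' : α → ℝ≥0∞, Measurable K' ∧ K ≤ K' ∧ K' =ᵐ[μ] K := by
  classical
  set N := toMeasurable μ {x | hK.mk K x ≠ K x}
  have hN : μ N = 0 := by
    rw [measure_toMeasurable]
    exact ae_iff.1 hK.ae_eq_mk.symm
  refine ⟨N.piecewise (fun _ => ∞) (hK.mk K),
    measurable_const.piecewise (measurableSet_toMeasurable _ _) hK.measurable_mk, fun x => ?_, ?_⟩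
  · by_cases hx : x ∈ N
    · simp [hx]
    · have : hK.mk K x = K x := of_not_not fun hne => hx (subset_toMeasurable _ _ hne)
      simp [hx, this]
  · exact (piecewise_ae_eq_of_ae_eq_set (ae_eq_empty.2 hN)).trans <| by
      simpa using hK.ae_eq_mk.symm

variable {E : Type*} [NormedAddCommGroup E] [NormedSpace ℝ E] [FiniteDimensional ℝ E]
  [MeasurableSpace E] [BorelSpace E] {μ : Measure E}

theorem setLIntegral_pos_eq_lintegral_Ioi {ℓ : E →L[ℝ] ℝ} {e : E ≃L[ℝ] ℝ × ℓ.ker}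
    (hℓ : ∀ x, (e x).1 = ℓ x) {ν : Measure ℓ.ker} [SFinite ν]
    (he : MeasurePreserving e μ (volume.prod ν)) {F : E → ℝ≥0∞} (hF : Measurable F) :
    ∫⁻ x in {x | 0 < ℓ x}, F x ∂μ = ∫⁻ r in Ioi 0, ∫⁻ u, F (e.symm (r, u)) ∂ν := by
  have hemb : MeasurableEmbedding e := e.toHomeomorph.measurableEmbedding
  have preimage_eq : e ⁻¹' (Ioi 0 ×ˢ univ) = {x | 0 < ℓ x} := by
    ext x
    simp [hℓ]
  calc ∫⁻ x in {x | 0 < ℓ x}, F x ∂μ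
      = ∫⁻ x in e ⁻¹' (Ioi 0 ×ˢ univ), F (e.symm (e x)) ∂μ := by simp [preimage_eq]
    _ = ∫⁻ z in Ioi 0 ×ˢ univ, F (e.symm z) ∂(volume.prod ν) :=
        he.setLIntegral_comp_preimage_emb hemb (fun z => F (e.symm z)) _
    _ = ∫⁻ r in Ioi 0, ∫⁻ u, F (e.symm (r, u)) ∂ν := by
        rw [setLIntegral_prod, Measure.restrict_univ]
        exact (hF.comp e.symm.continuous.measurable).aemeasurable

variable [μ.IsAddHaarMeasure]

theorem inv_setLIntegral_pos_le_of_measurable {ℓ : E →L[ℝ] ℝ} (hℓ : ℓ ≠ 0) {F G K : E → ℝ≥0∞}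
    (hF : Measurable F) (hG : Measurable G) (hK : Measurable K) {a b : ℝ} (ha : 0 < a)
    (hb : 0 < b) (hab : a + b = 1)
    (h : ∀ x y, 0 < ℓ x → 0 < ℓ y → ∀ θ η : ℝ, 0 < θ → 0 < η → θ + η = 1 →
      θ * b * ℓ x = η * a * ℓ y → F x ^ θ * G y ^ η ≤ K (θ • x + η • y)) :
    (∫⁻ x in {x | 0 < ℓ x}, K x ∂μ)⁻¹ ≤
      ENNReal.ofReal a * (∫⁻ x in {x | 0 < ℓ x}, F x ∂μ)⁻¹ +
        ENNReal.ofReal b * (∫⁻ x in {x | 0 < ℓ x}, G x ∂μ)⁻¹ := by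
  obtain ⟨e, ν, hν, hfst, he⟩ := exists_equiv_prod_ker_measurePreserving μ hℓ
  have apply_symm (r : ℝ) (u : ℓ.ker) : ℓ (e.symm (r, u)) = r := by simp [← hfst]
  have measurable_comp {Φ : E → ℝ≥0∞} (hΦ : Measurable Φ) : Measurable fun z => Φ (e.symm z) :=
    hΦ.comp e.symm.continuous.measurable
  simp only [setLIntegral_pos_eq_lintegral_Ioi hfst he, hF, hG, hK]
  refine inv_lintegral_Ioi_le_of_harmonic (measurable_comp hF).lintegral_prod_right'
    (measurable_comp hG).lintegral_prod_right' (measurable_comp hK).lintegral_prod_right'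
    ha hb hab fun r s hr hs θ η hθ hη hθη hrs => ?_
  refine satisfiesPrekopaLeindler_of_isAddHaarMeasure ν
    ((measurable_comp hF).comp measurable_prodMk_left)
    ((measurable_comp hG).comp measurable_prodMk_left)
    ((measurable_comp hK).comp measurable_prodMk_left) hθ hη hθη fun u v => ?_
  have slice_combination : e.symm (θ * r + η * s, θ • u + η • v) =
      θ • e.symm (r, u) + η • e.symm (s, v) := by
    simp [← map_smul, ← map_add]
  simpa only [Function.comp_apply, slice_combination] using h (e.symm (r, u)) (e.symm (s, v))
    (by rwa [apply_symm]) (by rwa [apply_symm]) θ η hθ hη hθη (by rwa [apply_symm, apply_symm])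

theorem inv_setLIntegral_pos_le {ℓ : E →L[ℝ] ℝ} (hℓ : ℓ ≠ 0) {F G K : E → ℝ≥0∞}
    (hK : AEMeasurable K μ) {a b : ℝ} (ha : 0 < a) (hb : 0 < b) (hab : a + b = 1)
    (h : ∀ x y, 0 < ℓ x → 0 < ℓ y → ∀ θ η : ℝ, 0 < θ → 0 < η → θ + η = 1 →
      θ * b * ℓ x = η * a * ℓ y → F x ^ θ * G y ^ η ≤ K (θ • x + η • y)) :
    (∫⁻ x in {x | 0 < ℓ x}, K x ∂μ)⁻¹ ≤
      ENNReal.ofReal a * (∫⁻ x in {x | 0 < ℓ x}, F x ∂μ)⁻¹ +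
        ENNReal.ofReal b * (∫⁻ x in {x | 0 < ℓ x}, G x ∂μ)⁻¹ := by
  obtain ⟨F', hF', hF'F, hF_eq⟩ :=
    exists_measurable_le_lintegral_eq (μ.restrict {x | 0 < ℓ x}) F
  obtain ⟨G', hG', hG'G, hG_eq⟩ :=
    exists_measurable_le_lintegral_eq (μ.restrict {x | 0 < ℓ x}) G
  obtain ⟨K', hK', hKK', hK_eq⟩ := exists_measurable_ge_ae_eq hK
  rw [hF_eq, hG_eq, ← lintegral_congr_ae (ae_restrict_of_ae hK_eq)]
  refine inv_setLIntegral_pos_le_of_measurable hℓ hF' hG' hK' ha hb hab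
    fun x y hx hy θ η hθ hη hθη hxy => ?_
  calc F' x ^ θ * G' y ^ η ≤ F x ^ θ * G y ^ η := by gcongr; exacts [hF'F x, hG'G y]
    _ ≤ K (θ • x + η • y) := h x y hx hy θ η hθ hη hθη hxy
    _ ≤ K' (θ • x + η • y) := hKK' _

end HalfSpace

section Slab

variable {E : Type*} [NormedAddCommGroup E] [NormedSpace ℝ E]

/-- The symmetric slab of points at which the functional `ℓ` has absolute value at most one.
Indexing slabs by functionals rather than vectors avoids the choice of an inner product. -/
def slab (ℓ : E →L[ℝ] ℝ) : Set E := {x | |ℓ x| ≤ 1}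

theorem isClosed_slab (ℓ : E →L[ℝ] ℝ) : IsClosed (slab ℓ) :=
  isClosed_le (by fun_prop) continuous_const

theorem slab_mem_nhds_zero (ℓ : E →L[ℝ] ℝ) : slab ℓ ∈ 𝓝 (0 : E) := by
  have : {x | |ℓ x| < 1} ∈ 𝓝 (0 : E) :=
    (isOpen_lt (by fun_prop) continuous_const).mem_nhds (by simp)
  exact mem_of_superset this fun x (hx : |ℓ x| < 1) => hx.le

theorem neg_mem_slab {ℓ : E →L[ℝ] ℝ} {x : E} : -x ∈ slab ℓ ↔ x ∈ slab ℓ := by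
  simp [slab]

theorem smul_add_smul_mem_slab {ℓ₁ ℓ₂ : E →L[ℝ] ℝ} {a b θ η : ℝ} (hab : a + b = 1)
    (hθ : 0 ≤ θ) (hη : 0 ≤ η) (hθη : θ + η = 1) {x y : E}
    (hxy : θ * b * (ℓ₂ - ℓ₁) x = η * a * (ℓ₂ - ℓ₁) y) (hx : x ∈ slab ℓ₁) (hy : y ∈ slab ℓ₂) :
    θ • x + η • y ∈ slab (a • ℓ₁ + b • ℓ₂) := by
  have apply_eq : (a • ℓ₁ + b • ℓ₂) (θ • x + η • y) = θ • ℓ₁ x + η • ℓ₂ y := by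
    simp only [sub_apply, add_apply, smul_apply, map_add, map_smul, smul_eq_mul] at hxy ⊢
    linear_combination hxy + (θ * ℓ₁ x + η * ℓ₂ y) * hab
  have hconv : Convex ℝ {r : ℝ | |r| ≤ 1} := by
    simpa [Metric.closedBall, Real.dist_eq] using convex_closedBall (0 : ℝ) 1
  simpa only [slab, mem_ofPred_eq, apply_eq] using hconv hx hy hθ hη hθη

end Slab

section LogConcave

/-- Log-concavity of a function with values in `[0, ∞]`, stated multiplicatively with
positive weights so that no exponent is zero. -/
def IsLogConcave {E : Type*} [AddCommGroup E] [Module ℝ E] (φ : E → ℝ≥0∞) : Prop :=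
  ∀ ⦃x y : E⦄ ⦃a b : ℝ⦄, 0 < a → 0 < b → a + b = 1 → φ x ^ a * φ y ^ b ≤ φ (a • x + b • y)

variable {E : Type*} [AddCommGroup E] [Module ℝ E]

theorem isLogConcave_ofReal {p : E → ℝ} (hp₀ : ∀ x, 0 ≤ p x)
    (hp : ∀ x y, ∀ t ∈ Icc (0 : ℝ) 1, p x ^ (1 - t) * p y ^ t ≤ p ((1 - t) • x + t • y)) :
    IsLogConcave fun x => ENNReal.ofReal (p x) := by
  intro x y a b ha hb hab
  obtain rfl : a = 1 - b := by linarith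
  simpa only [ENNReal.ofReal_rpow_of_nonneg (hp₀ _) ha.le,
    ENNReal.ofReal_rpow_of_nonneg (hp₀ _) hb.le,
    ← ENNReal.ofReal_mul (Real.rpow_nonneg (hp₀ x) _)] using
    ENNReal.ofReal_le_ofReal (hp x y b ⟨hb.le, by linarith⟩)

theorem IsLogConcave.le_apply_smul_of_even {φ : E → ℝ≥0∞} (hφ : IsLogConcave φ)
    (hφ_even : φ.Even) (x : E) {t : ℝ} (ht₀ : 0 ≤ t) (ht₁ : t ≤ 1) : φ x ≤ φ (t • x) := by
  rcases ht₁.eq_or_lt with rfl | ht₁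
  · simp
  calc φ x = φ x ^ ((1 + t) / 2) * φ (-x) ^ ((1 - t) / 2) := by
        have weights_add : (1 + t) / 2 + (1 - t) / 2 = 1 := by ring
        rw [hφ_even, ← ENNReal.rpow_add_of_nonneg _ _ (by linarith) (by linarith), weights_add,
          ENNReal.rpow_one]
    _ ≤ φ (((1 + t) / 2) • x + ((1 - t) / 2) • -x) := hφ (by linarith) (by linarith) (by ring)
    _ = φ (t • x) := by
        congr 1
        module

theorem IsLogConcave.starConvex_support_of_even {φ : E → ℝ≥0∞} (hφ : IsLogConcave φ)
    (hφ_even : φ.Even) : StarConvex ℝ 0 φ.support :=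
  starConvex_zero_iff.2 fun x hx _ ht₀ ht₁ =>
    ((pos_iff_ne_zero.2 hx).trans_le (hφ.le_apply_smul_of_even hφ_even x ht₀ ht₁)).ne'

end LogConcave

section SlabMass

variable {E : Type*} [NormedAddCommGroup E] [NormedSpace ℝ E]

theorem IsLogConcave.indicator_slab_rpow_mul_le {φ : E → ℝ≥0∞} (hφ : IsLogConcave φ)
    {ℓ₁ ℓ₂ : E →L[ℝ] ℝ} {a b θ η : ℝ} (hab : a + b = 1) (hθ : 0 < θ) (hη : 0 < η)
    (hθη : θ + η = 1) {x y : E} (hxy : θ * b * (ℓ₂ - ℓ₁) x = η * a * (ℓ₂ - ℓ₁) y) :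
    (slab ℓ₁).indicator φ x ^ θ * (slab ℓ₂).indicator φ y ^ η ≤
      (slab (a • ℓ₁ + b • ℓ₂)).indicator φ (θ • x + η • y) := by
  by_cases hx : x ∈ slab ℓ₁
  swap
  · simp [hx, hθ]
  by_cases hy : y ∈ slab ℓ₂
  swap
  · simp [hy, hη]
  rw [indicator_of_mem hx, indicator_of_mem hy,
    indicator_of_mem (smul_add_smul_mem_slab hab hθ.le hη.le hθη hxy hx hy)]
  exact hφ hθ hη hθη

variable [FiniteDimensional ℝ E] [MeasurableSpace E] [BorelSpace E] {μ : Measure E}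
  [μ.IsAddHaarMeasure]

theorem measure_eq_zero_of_starConvex {S T : Set E} (hS : StarConvex ℝ 0 S)
    (hT : T ∈ 𝓝 (0 : E)) (h : μ (S ∩ T) = 0) : μ S = 0 := by
  have subset_iUnion : S ⊆ ⋃ n : ℕ, ((n : ℝ) + 1) • (S ∩ T) := by
    intro x hx
    have tendsto_smul : Tendsto (fun n : ℕ => (1 / ((n : ℝ) + 1)) • x) atTop (𝓝 0) := by
      simpa using (tendsto_one_div_add_atTop_nhds_zero_nat (𝕜 := ℝ)).smul_const x
    obtain ⟨n, hn⟩ := (tendsto_smul.eventually_mem hT).exists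
    have hn₀ : (0 : ℝ) < n + 1 := by positivity
    refine mem_iUnion.2 ⟨n, (mem_smul_set_iff_inv_smul_mem₀ hn₀.ne' _ _).2 ?_⟩
    rw [← one_div]
    exact ⟨starConvex_zero_iff.1 hS hx (by positivity)
      ((div_le_one hn₀).2 (by linarith [n.cast_nonneg (α := ℝ)])), hn⟩
  refine measure_mono_null subset_iUnion (measure_iUnion_null fun n => ?_)
  rw [Measure.addHaar_smul, h, mul_zero]

theorem IsLogConcave.setLIntegral_ne_zero_of_even {φ : E → ℝ≥0∞} (hφ : IsLogConcave φ)
    (hφ_even : φ.Even) (hφ_meas : AEMeasurable φ μ) (hφ₀ : ∫⁻ x, φ x ∂μ ≠ 0) {T : Set E}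
    (hT : T ∈ 𝓝 (0 : E)) : ∫⁻ x in T, φ x ∂μ ≠ 0 := by
  contrapose! hφ₀
  rw [lintegral_eq_zero_iff' hφ_meas.restrict] at hφ₀
  rw [lintegral_eq_zero_iff' hφ_meas]
  have support_inter_null : μ (φ.support ∩ T) = 0 :=
    nonpos_iff_eq_zero.1 ((Measure.le_restrict_apply _ _).trans_eq (ae_iff.1 hφ₀))
  exact ae_iff.2 (measure_eq_zero_of_starConvex (hφ.starConvex_support_of_even hφ_even) hT
    support_inter_null)

theorem lintegral_eq_two_mul_setLIntegral_pos_of_even {ℓ : E →L[ℝ] ℝ} (hℓ : ℓ ≠ 0)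
    {Φ : E → ℝ≥0∞} (hΦ : Φ.Even) : ∫⁻ x, Φ x ∂μ = 2 * ∫⁻ x in {x | 0 < ℓ x}, Φ x ∂μ := by
  have measurable_pos : MeasurableSet {x | 0 < ℓ x} :=
    (isOpen_lt continuous_const ℓ.continuous).measurableSet
  have ker_null : ∀ᵐ x ∂μ, ℓ x ≠ 0 :=
    measure_eq_zero_iff_ae_notMem.1 <| Measure.addHaar_submodule μ ℓ.ker <| by
      rw [Ne, LinearMap.ker_eq_top]
      exact_mod_cast hℓ
  have compl_ae_eq : ({x | 0 < ℓ x}ᶜ : Set E) =ᵐ[μ] Neg.neg ⁻¹' {x | 0 < ℓ x} := by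
    filter_upwards [ker_null] with x hx
    change (¬ 0 < ℓ x) = (0 < ℓ (-x))
    rw [map_neg, neg_pos, not_lt, hx.le_iff_lt]
  have reflect : ∫⁻ x in {x | 0 < ℓ x}ᶜ, Φ x ∂μ = ∫⁻ x in {x | 0 < ℓ x}, Φ x ∂μ := by
    rw [setLIntegral_congr compl_ae_eq]
    simpa only [hΦ _] using
      (Measure.measurePreserving_neg μ).setLIntegral_comp_preimage_emb
        (MeasurableEquiv.neg E).measurableEmbedding Φ {x | 0 < ℓ x}
  rw [← lintegral_add_compl Φ measurable_pos, reflect, two_mul]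

theorem IsLogConcave.inv_setLIntegral_slab_le_of_even {φ : E → ℝ≥0∞} (hφ : IsLogConcave φ)
    (hφ_even : φ.Even) (hφ_meas : AEMeasurable φ μ) (ℓ₁ ℓ₂ : E →L[ℝ] ℝ) {a b : ℝ} (ha : 0 < a)
    (hb : 0 < b) (hab : a + b = 1) :
    (∫⁻ x in slab (a • ℓ₁ + b • ℓ₂), φ x ∂μ)⁻¹ ≤
      ENNReal.ofReal a * (∫⁻ x in slab ℓ₁, φ x ∂μ)⁻¹ +
        ENNReal.ofReal b * (∫⁻ x in slab ℓ₂, φ x ∂μ)⁻¹ := by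
  rcases eq_or_ne ℓ₁ ℓ₂ with rfl | hℓ
  · rw [← add_smul, ← add_mul, ← ENNReal.ofReal_add ha.le hb.le, hab, one_smul,
      ENNReal.ofReal_one, one_mul]
  have hℓ : ℓ₂ - ℓ₁ ≠ 0 := sub_ne_zero.2 hℓ.symm
  have inv_setLIntegral_eq (ℓ : E →L[ℝ] ℝ) : (∫⁻ x in slab ℓ, φ x ∂μ)⁻¹ =
      2⁻¹ * (∫⁻ x in {x | 0 < (ℓ₂ - ℓ₁) x}, (slab ℓ).indicator φ x ∂μ)⁻¹ := by
    have indicator_even : ((slab ℓ).indicator φ).Even := fun x => by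
      by_cases hx : x ∈ slab ℓ <;> simp [hx, neg_mem_slab, hφ_even x]
    rw [← lintegral_indicator (isClosed_slab ℓ).measurableSet,
      lintegral_eq_two_mul_setLIntegral_pos_of_even hℓ indicator_even,
      ENNReal.mul_inv (by simp) (by simp)]
  have half_space := inv_setLIntegral_pos_le hℓ
    (hφ_meas.indicator (isClosed_slab (a • ℓ₁ + b • ℓ₂)).measurableSet) ha hb hab
    fun x y _ _ θ η hθ hη hθη hxy => hφ.indicator_slab_rpow_mul_le hab hθ hη hθη hxy
  simpa only [inv_setLIntegral_eq, mul_add, mul_left_comm] using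
    mul_le_mul_right half_space (2⁻¹ : ℝ≥0∞)

theorem stmt_1_general {p : E → ℝ} (hp₀ : ∀ ξ, 0 ≤ p ξ) (hp_int : 0 < ∫ ξ, p ξ ∂μ)
    (hp : ∀ x y, ∀ t ∈ Icc (0 : ℝ) 1, p x ^ (1 - t) * p y ^ t ≤ p ((1 - t) • x + t • y))
    (hp_even : p.Even) :
    (∀ ℓ : E →L[ℝ] ℝ, 0 < ∫ ξ in slab ℓ, p ξ ∂μ) ∧
      ConvexOn ℝ univ fun ℓ : E →L[ℝ] ℝ => 1 / ∫ ξ in slab ℓ, p ξ ∂μ := by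
  set φ : E → ℝ≥0∞ := fun ξ => ENNReal.ofReal (p ξ)
  have hφ : IsLogConcave φ := isLogConcave_ofReal hp₀ hp
  have hφ_even : φ.Even := hp_even.left_comp ENNReal.ofReal
  have hp_integrable : Integrable p μ := not_imp_comm.1 integral_undef hp_int.ne'
  have hφ_meas : AEMeasurable φ μ := hp_integrable.aemeasurable.ennreal_ofReal
  have hφ₀ : ∫⁻ ξ, φ ξ ∂μ ≠ 0 := by
    rw [← ofReal_integral_eq_lintegral_ofReal hp_integrable (.of_forall hp₀)]
    exact (ENNReal.ofReal_pos.2 hp_int).ne'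
  have mass_pos (ℓ : E →L[ℝ] ℝ) : 0 < ∫ ξ in slab ℓ, p ξ ∂μ := by
    rw [← ENNReal.ofReal_pos,
      ofReal_integral_eq_lintegral_ofReal hp_integrable.integrableOn (.of_forall hp₀)]
    exact pos_iff_ne_zero.2
      (hφ.setLIntegral_ne_zero_of_even hφ_even hφ_meas hφ₀ (slab_mem_nhds_zero ℓ))
  have ofReal_inv_mass (ℓ : E →L[ℝ] ℝ) :
      ENNReal.ofReal (1 / ∫ ξ in slab ℓ, p ξ ∂μ) = (∫⁻ ξ in slab ℓ, φ ξ ∂μ)⁻¹ := by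
    rw [one_div, ENNReal.ofReal_inv_of_pos (mass_pos ℓ),
      ofReal_integral_eq_lintegral_ofReal hp_integrable.integrableOn (.of_forall hp₀)]
  refine ⟨mass_pos, convexOn_iff_forall_pos.2 ⟨convex_univ, ?_⟩⟩
  intro ℓ₁ _ ℓ₂ _ a b ha hb hab
  have h₁ := one_div_pos.2 (mass_pos ℓ₁)
  have h₂ := one_div_pos.2 (mass_pos ℓ₂)
  simp only [smul_eq_mul]
  rw [← ENNReal.ofReal_le_ofReal_iff (by positivity), ENNReal.ofReal_add (by positivity)
    (by positivity), ENNReal.ofReal_mul ha.le, ENNReal.ofReal_mul hb.le]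
  simpa only [ofReal_inv_mass] using
    hφ.inv_setLIntegral_slab_le_of_even hφ_even hφ_meas ℓ₁ ℓ₂ ha hb hab

end SlabMass

end

/-- Lemma 1 (Bobkov): for a symmetric log-concave density `p`, the slab probability
`f(x) = ∫_{|⟨ξ,x⟩| ≤ 1} p` is positive and `1/f` is convex. -/
theorem stmt_1 {d : ℕ} (p : EuclideanSpace ℝ (Fin d) → ℝ)
    (hp0 : ∀ ξ, 0 ≤ p ξ) (hpint : Integrable p)
    (hp1 : ∫ ξ, p ξ = 1)
    (hlogconcave : ∀ x y : EuclideanSpace ℝ (Fin d), ∀ t ∈ Set.Icc (0 : ℝ) 1,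
      p x ^ (1 - t) * p y ^ t ≤ p ((1 - t) • x + t • y))
    (hsym : ∀ x, p (-x) = p x) :
    (∀ x : EuclideanSpace ℝ (Fin d),
      0 < ∫ ξ in {ξ : EuclideanSpace ℝ (Fin d) | |⟪ξ, x⟫_ℝ| ≤ 1}, p ξ) ∧
    ConvexOn ℝ Set.univ (fun x : EuclideanSpace ℝ (Fin d) =>
      1 / ∫ ξ in {ξ : EuclideanSpace ℝ (Fin d) | |⟪ξ, x⟫_ℝ| ≤ 1}, p ξ) := by
  obtain ⟨hpos, hconvex⟩ := stmt_1_general hp0 (hp1 ▸ one_pos) hlogconcave hsym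
  simp only [real_inner_comm]
  exact ⟨fun x => hpos (innerSL ℝ x), hconvex.comp_linearMap (innerSL ℝ).toLinearMap⟩
end

section
/- Let X ⊆ ℝⁿ be a closed convex set, let f : ℝⁿ → ℝ be differentiable with ∇f Lipschitz continuous with constant L, and suppose h(x) := 1/f(x) is convex on X with ε ≤ f(x) ≤ 1 on X for some 0 < ε ≤ 1, and the solution set X* := argmin_{x ∈ X} h(x) is nonempty. Let (Ω, F, P) be a probability space with filtration (F_k)_{k≥0}, and let (γ_k) and (β_k) be positive deterministic sequences with ∑_k γ_k/β_k = ∞, ∑_k γ_k²/β_k² < ∞, and 0 < β_k ≤ ε for all k. Let x₀ be an F₀-measurable X-valued random variable, and let (w_k) be random vectors such that w_k is F_{k+1}-measurable, E[w_k | F_k] = 0 almost surely, and E[‖w_k‖² | F_k] ≤ ν² almost surely for some ν ≥ 0. Define iterates by x_{k+1}(ω) ∈ X with ‖x_{k+1}(ω) − z_k(ω)‖ ≤ ‖y − z_k(ω)‖ for all y ∈ X, where z_k := x_k + (γ_k/β_k)(∇f(x_k) + w_k) (i.e., x_{k+1} is the Euclidean projection of z_k onto X). Then, almost surely, the sequence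 (x_k) converges to a point of X*. -/
open MeasureTheory Filter
open scoped InnerProductSpace

/-!
Convexity of `1 / f` gives `f x ^ 2 * (1 / f x - 1 / f s) ≤ ⟪∇f x, s - x⟫`, so at every point of `X`
the field `∇f` points towards each minimiser `s`. As the projection onto `X` is nonexpansive,
`‖x k - s‖ ^ 2` is then a supermartingale up to summable errors, and the Robbins–Siegmund theorem
yields almost surely that `‖x k - s‖` converges and that `∑ a k * ⟪∇f (x k), s - x k⟫` is finite,
where `a k = γ k / β k`. Since `∑ a k = ∞`, the second fact produces a cluster point `q` of `x` with
`⟪∇f q, s - q⟫ = 0`, that is, a minimiser. The first fact holds simultaneously for all `s` in a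
countable dense set of minimisers, and choosing `s` close to `q` forces the whole sequence to
converge to `q`.
-/

open scoped Topology

section Deterministic

theorem frequently_lt_of_summable_mul {a r : ℕ → ℝ} (ha : ∀ k, 0 ≤ a k) (ha_div : ¬Summable a)
    (hsum : Summable fun k => a k * r k) {δ : ℝ} (hδ : 0 < δ) : ∃ᶠ k in atTop, r k < δ := by
  by_contra h
  refine ha_div (.of_norm_bounded_eventually_nat (hsum.mul_left δ⁻¹) ?_)
  filter_upwards [not_frequently.1 h] with k hk
  rw [Real.norm_of_nonneg (ha k), inv_mul_eq_div, le_div_iff₀ hδ]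
  exact mul_le_mul_of_nonneg_left (not_lt.1 hk) (ha k)

theorem exists_mapClusterPt_nonpos_of_summable_mul {E : Type*} [PseudoMetricSpace E]
    [ProperSpace E] {X : Set E} (hX : IsClosed X) {ρ : E → ℝ} (hρ : ContinuousOn ρ X)
    {a : ℕ → ℝ} (ha : ∀ k, 0 ≤ a k) (ha_div : ¬Summable a) {x : ℕ → E} (hx : ∀ k, x k ∈ X)
    (hx_bdd : Bornology.IsBounded (Set.range x)) (hsum : Summable fun k => a k * ρ (x k)) :
    ∃ q ∈ X, ρ q ≤ 0 ∧ MapClusterPt q atTop x := by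
  obtain ⟨σ, hσ, hσ_lt⟩ : ∃ σ : ℕ → ℕ, StrictMono σ ∧ ∀ k : ℕ, ρ (x (σ k)) < 1 / ((k : ℝ) + 1) :=
    extraction_forall_of_frequently fun k =>
      frequently_lt_of_summable_mul ha ha_div hsum Nat.one_div_pos_of_nat
  obtain ⟨q, -, τ, hτ, hq⟩ := tendsto_subseq_of_bounded hx_bdd fun k => Set.mem_range_self (σ k)
  have hqX : q ∈ X := hX.mem_of_tendsto hq (.of_forall fun k => hx _)
  have hρ_lim : Tendsto (fun k => ρ (x (σ (τ k)))) atTop (𝓝 (ρ q)) :=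
    (hρ q hqX).tendsto.comp (tendsto_nhdsWithin_iff.2 ⟨hq, .of_forall fun k => hx _⟩)
  have hρq : ρ q ≤ 0 :=
    le_of_tendsto_of_tendsto' hρ_lim
      (tendsto_one_div_add_atTop_nhds_zero_nat.comp hτ.tendsto_atTop) fun k => (hσ_lt (τ k)).le
  exact ⟨q, hqX, hρq, hq.mapClusterPt.of_comp (hσ.comp hτ).tendsto_atTop⟩

theorem tendsto_of_mapClusterPt_of_tendsto_dist {ι E : Type*} [PseudoMetricSpace E]
    {l : Filter ι} {x : ι → E} {q : E} {D : Set E} (hq : MapClusterPt q l x)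
    (hqD : q ∈ closure D) (hD : ∀ d ∈ D, ∃ r, Tendsto (fun i => dist (x i) d) l (𝓝 r)) :
    Tendsto x l (𝓝 q) := by
  refine Metric.tendsto_nhds.2 fun δ hδ => ?_
  obtain ⟨d, hdD, hqd⟩ := Metric.mem_closure_iff.1 hqD (δ / 2) (half_pos hδ)
  obtain ⟨r, hr⟩ := hD d hdD
  have hr_eq : dist q d = r := by
    have hcluster : MapClusterPt (dist q d) l fun i => dist (x i) d :=
      hq.continuousAt_comp (f := fun y => dist y d) (by fun_prop)
    exact eq_of_nhds_neBot (hcluster.neBot.mono (inf_le_inf_left _ hr))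
  filter_upwards [hr.eventually_lt_const (hr_eq ▸ hqd)] with i hi
  linarith [dist_triangle_right (x i) q d]

theorem isBounded_range_of_tendsto_dist {A : Type*} [PseudoMetricSpace A] {y : ℕ → A} {s : A}
    {r : ℝ} (h : Tendsto (fun k => dist (y k) s) atTop (𝓝 r)) :
    Bornology.IsBounded (Set.range y) := by
  obtain ⟨R, hR⟩ := h.bddAbove_range
  exact Metric.isBounded_closedBall.subset (Set.range_subset_iff.2 fun k =>
    Metric.mem_closedBall.2 (hR (Set.mem_range_self k)))

end Deterministic

section LinearGrowth

variable {E F : Type*} [SeminormedAddCommGroup E] [SeminormedAddCommGroup F]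

theorem norm_le_mul_one_add_norm_of_lipschitzWith {K : NNReal} {G : E → F}
    (hG : LipschitzWith K G) (x : E) : ‖G x‖ ≤ (‖G 0‖ + K) * (1 + ‖x‖) := by
  have hlip : ‖G x - G 0‖ ≤ K * ‖x‖ := by simpa using hG.norm_sub_le x 0
  nlinarith [norm_le_norm_add_norm_sub' (G x) (G 0), norm_nonneg (G 0), norm_nonneg x, K.2]

theorem norm_le_mul_one_add_norm_add_mul_norm_sub {u : F} {y : E} {C : ℝ}
    (hu : ‖u‖ ≤ C * (1 + ‖y‖)) (s : E) : ‖u‖ ≤ C * (1 + ‖s‖) + C * ‖y - s‖ := by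
  have hC : 0 ≤ C := nonneg_of_mul_nonneg_left ((norm_nonneg _).trans hu) (by positivity)
  nlinarith [norm_le_norm_add_norm_sub' y s]

end LinearGrowth

section InnerProduct

variable {E : Type*} [NormedAddCommGroup E] [InnerProductSpace ℝ E]

theorem norm_sub_le_of_forall_norm_sub_le {X : Set E} (hX : Convex ℝ X) {p z y : E} (hp : p ∈ X)
    (hmin : ∀ v ∈ X, ‖p - z‖ ≤ ‖v - z‖) (hy : y ∈ X) : ‖p - y‖ ≤ ‖z - y‖ := by
  have : Nonempty X := ⟨⟨p, hp⟩⟩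
  have hdist : ‖z - p‖ = ⨅ v : X, ‖z - v‖ :=
    le_antisymm (le_ciInf fun v => by simpa only [norm_sub_rev z] using hmin v v.2)
      (ciInf_le ⟨0, Set.forall_mem_range.2 fun v : X => norm_nonneg (z - v)⟩ (⟨p, hp⟩ : X))
  have hobtuse : ⟪z - p, y - p⟫_ℝ ≤ 0 := (norm_eq_iInf_iff_real_inner_le_zero hX hp).1 hdist y hy
  refine pow_le_pow_iff_left₀ (norm_nonneg _) (norm_nonneg _) two_ne_zero |>.1 ?_
  calc ‖p - y‖ ^ 2 = ‖y - p‖ ^ 2 := by rw [norm_sub_rev]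
    _ ≤ ‖z - p‖ ^ 2 - 2 * ⟪z - p, y - p⟫_ℝ + ‖y - p‖ ^ 2 := by nlinarith [sq_nonneg ‖z - p‖]
    _ = ‖z - y‖ ^ 2 := by rw [← norm_sub_sq_real, sub_sub_sub_cancel_right]

theorem norm_sub_add_smul_sq_le {x u s : E} {C L : ℝ} (hu : ‖u‖ ≤ C + L * ‖x - s‖) (a : ℝ) :
    ‖x - s + a • u‖ ^ 2 ≤
      (1 + 2 * L ^ 2 * a ^ 2) * ‖x - s‖ ^ 2 - 2 * a * ⟪u, s - x⟫_ℝ + 2 * C ^ 2 * a ^ 2 := by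
  have hu_sq : ‖u‖ ^ 2 ≤ 2 * (C ^ 2 + (L * ‖x - s‖) ^ 2) :=
    (pow_le_pow_left₀ (norm_nonneg u) hu 2).trans add_sq_le
  have hexpand : ‖x - s + a • u‖ ^ 2 = ‖x - s‖ ^ 2 - 2 * a * ⟪u, s - x⟫_ℝ + a ^ 2 * ‖u‖ ^ 2 := by
    rw [norm_add_sq_real, inner_smul_right, norm_smul, mul_pow, Real.norm_eq_abs, sq_abs,
      ← neg_sub x s, inner_neg_right, real_inner_comm]
    ring
  rw [hexpand]
  linarith [mul_le_mul_of_nonneg_left hu_sq (sq_nonneg a)]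

theorem inner_gradient_le_sub [CompleteSpace E] {X : Set E} {h : E → ℝ} (hh : ConvexOn ℝ X h)
    {g x y : E} (hg : HasGradientAt h g x) (hx : x ∈ X) (hy : y ∈ X) :
    ⟪g, y - x⟫_ℝ ≤ h y - h x := by
  have hline : HasDerivAt (fun t : ℝ => h (AffineMap.lineMap x y t)) ⟪g, y - x⟫_ℝ 0 := by
    have hg₀ : HasFDerivAt h (InnerProductSpace.toDual ℝ E g) (AffineMap.lineMap x y (0 : ℝ)) := by
      simpa only [AffineMap.lineMap_apply_zero] using hg.hasFDerivAt
    exact hg₀.comp_hasDerivAt 0 AffineMap.hasDerivAt_lineMap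
  have hline_convex : ConvexOn ℝ (Set.Icc 0 1) fun t : ℝ => h (AffineMap.lineMap x y t) :=
    (hh.comp_affineMap (AffineMap.lineMap x y)).subset (fun t => hh.1.lineMap_mem hx hy)
      (convex_Icc 0 1)
  simpa [slope_def_field] using
    hline_convex.le_slope_of_hasDerivAt (by simp) (by simp) one_pos hline

theorem hasGradientAt_one_div [CompleteSpace E] {f : E → ℝ} {g x : E} (hf : HasGradientAt f g x)
    (hx : f x ≠ 0) : HasGradientAt (fun y => 1 / f y) (-(f x ^ 2)⁻¹ • g) x := by
  have := (hasDerivAt_inv hx).comp_hasFDerivAt x hf.hasFDerivAt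
  simpa [hasGradientAt_iff_hasFDerivAt, Function.comp_def] using this

theorem sq_mul_one_div_sub_one_div_le_inner [CompleteSpace E] {X : Set E} {f : E → ℝ}
    (hconv : ConvexOn ℝ X fun x => 1 / f x) {g x y : E} (hg : HasGradientAt f g x) (hx : x ∈ X)
    (hy : y ∈ X) (hfx : f x ≠ 0) : f x ^ 2 * (1 / f x - 1 / f y) ≤ ⟪g, y - x⟫_ℝ := by
  have hgrad := inner_gradient_le_sub hconv (hasGradientAt_one_div hg hfx) hx hy
  have hsq : 0 < f x ^ 2 := by positivity
  rw [real_inner_smul_left, neg_mul, inv_mul_eq_div, neg_le, neg_sub, le_div_iff₀ hsq] at hgrad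
  rwa [mul_comm]

end InnerProduct

section RobbinsSiegmund

variable {Ω : Type*} {m0 : MeasurableSpace Ω} {P : Measure Ω} [IsFiniteMeasure P]
  {F : Filtration ℕ m0}

theorem ae_exists_tendsto_of_supermartingale_nonneg {U : ℕ → Ω → ℝ} (hU : Supermartingale U F P)
    (hU_nonneg : ∀ k ω, 0 ≤ U k ω) : ∀ᵐ ω ∂P, ∃ l, Tendsto (fun k => U k ω) atTop (𝓝 l) := by
  have hbound : ∀ k, eLpNorm ((-U) k) 1 P ≤ ((∫ ω, U 0 ω ∂P).toNNReal : ENNReal) := fun k => by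
    have hle : ∫ ω, U k ω ∂P ≤ ∫ ω, U 0 ω ∂P := by
      simpa using hU.setIntegral_le (Nat.zero_le k) MeasurableSet.univ
    calc eLpNorm ((-U) k) 1 P = ENNReal.ofReal (∫ ω, ‖U k ω‖ ∂P) := by
          rw [Pi.neg_apply, eLpNorm_neg, eLpNorm_one_eq_lintegral_enorm,
            ofReal_integral_norm_eq_lintegral_enorm (hU.integrable k)]
      _ ≤ ((∫ ω, U 0 ω ∂P).toNNReal : ENNReal) := by
          simp only [Real.norm_of_nonneg (hU_nonneg _ _)]
          exact ENNReal.ofReal_le_ofReal hle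
  filter_upwards [hU.neg.exists_ae_tendsto_of_bdd hbound] with ω ⟨l, hl⟩
  exact ⟨-l, by simpa using hl.neg⟩

theorem supermartingale_add_sum_sub_sum {V g : ℕ → Ω → ℝ} {b : ℕ → ℝ}
    (hV : StronglyAdapted F V) (hg : StronglyAdapted F g) (hV_int : ∀ k, Integrable (V k) P)
    (hg_int : ∀ k, Integrable (g k) P)
    (h : ∀ k, P[V (k + 1) | F k] ≤ᵐ[P] fun ω => V k ω - g k ω + b k) (B : ℝ) :
    Supermartingale (fun k ω => V k ω +
      (∑ j ∈ Finset.range k, g j ω + (B - ∑ j ∈ Finset.range k, b j))) F P := by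
  set R : ℕ → Ω → ℝ := fun k ω =>
    ∑ j ∈ Finset.range k, g j ω + (B - ∑ j ∈ Finset.range k, b j) with hR
  have hR_int (k : ℕ) : Integrable (R k) P :=
    (integrable_finsetSum _ fun j _ => hg_int j).add (integrable_const _)
  have hR_meas {i k : ℕ} (hk : k ≤ i + 1) : StronglyMeasurable[F i] (R k) := by
    refine (Finset.stronglyMeasurable_fun_sum _ fun j hj => ?_).add stronglyMeasurable_const
    exact (hg j).mono (F.mono (by grind))
  refine supermartingale_nat (fun k => (hV k).add (hR_meas k.le_succ))
    (fun k => (hV_int k).add (hR_int k)) fun k => ?_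
  have hR_condExp : P[R (k + 1) | F k] = R (k + 1) :=
    condExp_of_stronglyMeasurable (F.le k) (hR_meas le_rfl) (hR_int _)
  filter_upwards [condExp_add (hV_int (k + 1)) (hR_int (k + 1)) (F k), h k] with ω hadd hω
  have hR_succ : R (k + 1) ω = R k ω + g k ω - b k := by
    simp only [hR, Finset.sum_range_succ]
    ring
  calc P[V (k + 1) + R (k + 1) | F k] ω = P[V (k + 1) | F k] ω + R (k + 1) ω := by
        rw [hadd, Pi.add_apply, hR_condExp]
    _ ≤ V k ω + R k ω := by linarith

theorem ae_tendsto_and_summable_of_condExp_le_sub_add {V g : ℕ → Ω → ℝ} {b : ℕ → ℝ}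
    (hV : StronglyAdapted F V) (hg : StronglyAdapted F g) (hV_int : ∀ k, Integrable (V k) P)
    (hg_int : ∀ k, Integrable (g k) P) (hV_nonneg : ∀ k ω, 0 ≤ V k ω)
    (hg_nonneg : ∀ k ω, 0 ≤ g k ω) (hb_nonneg : ∀ k, 0 ≤ b k) (hb : Summable b)
    (h : ∀ k, P[V (k + 1) | F k] ≤ᵐ[P] fun ω => V k ω - g k ω + b k) :
    ∀ᵐ ω ∂P, (∃ l, Tendsto (fun k => V k ω) atTop (𝓝 l)) ∧ Summable fun k => g k ω := by
  have htail_nonneg (k : ℕ) : 0 ≤ ∑' j, b j - ∑ j ∈ Finset.range k, b j :=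
    sub_nonneg.2 (hb.sum_le_tsum _ fun j _ => hb_nonneg j)
  have hsum_nonneg (k : ℕ) (ω : Ω) : 0 ≤ ∑ j ∈ Finset.range k, g j ω :=
    Finset.sum_nonneg fun j _ => hg_nonneg j ω
  have hsuper := supermartingale_add_sum_sub_sum hV hg hV_int hg_int h (∑' j, b j)
  filter_upwards [ae_exists_tendsto_of_supermartingale_nonneg hsuper fun k ω =>
    add_nonneg (hV_nonneg k ω) (add_nonneg (hsum_nonneg k ω) (htail_nonneg k))] with ω ⟨l, hl⟩
  have hg_sum : Summable fun k => g k ω := by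
    obtain ⟨M, hM⟩ := hl.bddAbove_range
    refine summable_of_sum_range_le (c := M) (fun k => hg_nonneg k ω) fun k => ?_
    linarith [hM (Set.mem_range_self k), hV_nonneg k ω, htail_nonneg k]
  have htail_lim : Tendsto (fun k => ∑' j, b j - ∑ j ∈ Finset.range k, b j) atTop
      (𝓝 (∑' j, b j - ∑' j, b j)) := tendsto_const_nhds.sub hb.hasSum.tendsto_sum_nat
  exact ⟨⟨_, (hl.sub (hg_sum.hasSum.tendsto_sum_nat.add htail_lim)).congr
    fun k => add_sub_cancel_right _ _⟩, hg_sum⟩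

theorem robbins_siegmund {V g : ℕ → Ω → ℝ} {b c : ℕ → ℝ}
    (hV : StronglyAdapted F V) (hg : StronglyAdapted F g) (hV_int : ∀ k, Integrable (V k) P)
    (hg_int : ∀ k, Integrable (g k) P) (hV_nonneg : ∀ k ω, 0 ≤ V k ω)
    (hg_nonneg : ∀ k ω, 0 ≤ g k ω) (hb_nonneg : ∀ k, 0 ≤ b k) (hb : Summable b)
    (hc_nonneg : ∀ k, 0 ≤ c k) (hc : Summable c)
    (h : ∀ k, P[V (k + 1) | F k] ≤ᵐ[P] fun ω => (1 + c k) * V k ω - g k ω + b k) :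
    ∀ᵐ ω ∂P, (∃ l, Tendsto (fun k => V k ω) atTop (𝓝 l)) ∧ Summable fun k => g k ω := by
  set p : ℕ → ℝ := fun k => ∏ j ∈ Finset.range k, (1 + c j) with hp
  have hp_lim : Tendsto p atTop (𝓝 (∏' j, (1 + c j))) :=
    (Real.multipliable_one_add_of_summable hc).hasProd.tendsto_prod_nat
  have hp_one (k : ℕ) : 1 ≤ p k :=
    Finset.one_le_prod fun j _ => le_add_of_nonneg_right (hc_nonneg j)
  have hp_pos (k : ℕ) : 0 < p k := one_pos.trans_le (hp_one k)
  have hp_succ (k : ℕ) : (p (k + 1))⁻¹ * (1 + c k) = (p k)⁻¹ := by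
    have : 1 + c k ≠ 0 := by linarith [hc_nonneg k]
    simp only [hp, Finset.prod_range_succ]
    field_simp
  have hscaled : ∀ k, P[(p (k + 1))⁻¹ • V (k + 1) | F k] ≤ᵐ[P] fun ω =>
      (p k)⁻¹ * V k ω - (p (k + 1))⁻¹ * g k ω + (p (k + 1))⁻¹ * b k := fun k => by
    filter_upwards [condExp_smul (p (k + 1))⁻¹ (V (k + 1)) (F k), h k] with ω hsmul hω
    rw [hsmul, Pi.smul_apply, smul_eq_mul, ← hp_succ k]
    linarith [mul_le_mul_of_nonneg_left hω (inv_pos.2 (hp_pos (k + 1))).le]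
  have hb_scaled : Summable fun k => (p (k + 1))⁻¹ * b k :=
    hb.of_nonneg_of_le (fun k => mul_nonneg (inv_pos.2 (hp_pos _)).le (hb_nonneg k))
      fun k => mul_le_of_le_one_left (hb_nonneg k) (inv_le_one_of_one_le₀ (hp_one _))
  have hconv := ae_tendsto_and_summable_of_condExp_le_sub_add
    (fun k => (hV k).const_smul (p k)⁻¹) (fun k => (hg k).const_smul (p (k + 1))⁻¹)
    (fun k => (hV_int k).smul (p k)⁻¹) (fun k => (hg_int k).smul (p (k + 1))⁻¹)
    (fun k ω => mul_nonneg (inv_pos.2 (hp_pos _)).le (hV_nonneg k ω))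
    (fun k ω => mul_nonneg (inv_pos.2 (hp_pos _)).le (hg_nonneg k ω))
    (fun k => mul_nonneg (inv_pos.2 (hp_pos _)).le (hb_nonneg k)) hb_scaled hscaled
  filter_upwards [hconv] with ω ⟨⟨l, hl⟩, hsum⟩
  refine ⟨⟨_, (hp_lim.mul hl).congr fun k => mul_inv_cancel_left₀ (hp_pos k).ne' _⟩, ?_⟩
  have hp_succ_lim : Tendsto (fun k => p (k + 1)) cofinite (𝓝 (∏' j, (1 + c j))) :=
    Nat.cofinite_eq_atTop ▸ (tendsto_add_atTop_iff_nat 1).2 hp_lim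
  refine (Summable.mul_tendsto_const hsum.norm hp_succ_lim).congr fun k => ?_
  rw [Pi.smul_apply, smul_eq_mul, mul_comm, mul_inv_cancel_left₀ (hp_pos _).ne']

end RobbinsSiegmund

theorem stronglyMeasurable_comp_of_continuousOn {Ω A B : Type*} {m : MeasurableSpace Ω}
    [TopologicalSpace A] [TopologicalSpace.PseudoMetrizableSpace A]
    [TopologicalSpace B] [TopologicalSpace.PseudoMetrizableSpace B] [SecondCountableTopology B]
    {X : Set A} {G : A → B} (hG : ContinuousOn G X) {y : Ω → A} (hy : StronglyMeasurable y)
    (hyX : ∀ ω, y ω ∈ X) : StronglyMeasurable fun ω => G (y ω) := by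
  borelize A B
  exact ((continuousOn_iff_continuous_domRestrict.1 hG).measurable.comp
    (hy.measurable.subtype_mk (h := hyX))).stronglyMeasurable

section ConditionalSecondMoment

variable {Ω E : Type*} {m m0 : MeasurableSpace Ω} {P : Measure Ω}
  [NormedAddCommGroup E] [InnerProductSpace ℝ E]

theorem integrable_inner_of_memLp_two {u v : Ω → E} (hu : MemLp u 2 P) (hv : MemLp v 2 P) :
    Integrable (fun ω => ⟪u ω, v ω⟫_ℝ) P :=
  memLp_one_iff_integrable.1 ((innerSL ℝ).memLp_of_bilin 1 hu hv)

theorem condExp_norm_add_sq [CompleteSpace E] [IsFiniteMeasure P] (hm : m ≤ m0) {u v : Ω → E}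
    (hu_meas : StronglyMeasurable[m] u) (hu : MemLp u 2 P) (hv : MemLp v 2 P)
    (hv_zero : P[v | m] =ᵐ[P] 0) :
    P[fun ω => ‖u ω + v ω‖ ^ 2 | m] =ᵐ[P]
      fun ω => ‖u ω‖ ^ 2 + P[fun ω => ‖v ω‖ ^ 2 | m] ω := by
  have hu_sq : Integrable (fun ω => ‖u ω‖ ^ 2) P := hu.integrable_norm_pow two_ne_zero
  have hv_sq : Integrable (fun ω => ‖v ω‖ ^ 2) P := hv.integrable_norm_pow two_ne_zero
  have huv : Integrable (fun ω => ⟪u ω, v ω⟫_ℝ) P := integrable_inner_of_memLp_two hu hv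
  have hexpand : (fun ω => ‖u ω + v ω‖ ^ 2) =
      (fun ω => ‖u ω‖ ^ 2) + (2 : ℝ) • (fun ω => ⟪u ω, v ω⟫_ℝ) + fun ω => ‖v ω‖ ^ 2 :=
    funext fun ω => norm_add_sq_real (u ω) (v ω)
  have hu_condExp : P[fun ω => ‖u ω‖ ^ 2 | m] = fun ω => ‖u ω‖ ^ 2 :=
    condExp_of_stronglyMeasurable hm (hu_meas.norm.pow 2) hu_sq
  have hcross : P[fun ω => ⟪u ω, v ω⟫_ℝ | m] =ᵐ[P] fun ω => ⟪u ω, P[v | m] ω⟫_ℝ :=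
    condExp_bilin_of_stronglyMeasurable_left (innerSL ℝ) hu_meas huv (hv.integrable one_le_two)
  rw [hexpand]
  filter_upwards [condExp_add (hu_sq.add (huv.smul (2 : ℝ))) hv_sq m,
    condExp_add hu_sq (huv.smul (2 : ℝ)) m, condExp_smul (2 : ℝ) (fun ω => ⟪u ω, v ω⟫_ℝ) m,
    hcross, hv_zero] with ω hadd hadd' hsmul hinner hzero
  simp only [hadd, Pi.add_apply, hadd', hsmul, Pi.smul_apply, hinner, hzero, hu_condExp,
    Pi.zero_apply, inner_zero_right, smul_zero, add_zero]

end ConditionalSecondMoment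

section StochasticApproximation

variable {Ω E : Type*} {m0 : MeasurableSpace Ω} [NormedAddCommGroup E] [InnerProductSpace ℝ E]

/-- Projected stochastic approximation `x (k + 1) = Π_X (x k + a k • (G (x k) + w k))` on a set `X`
with square-integrable martingale-difference noise `w` of conditional variance at most `ν ^ 2`.
The projection is encoded by its minimality property, and `w k` is the noise revealed between
times `k` and `k + 1`. -/
structure IsProjectedStochasticApproximation (X : Set E) (G : E → E) (a : ℕ → ℝ) (ν : ℝ)
    (w x : ℕ → Ω → E) (F : Filtration ℕ m0) (P : Measure Ω) : Prop where
  stronglyAdapted : StronglyAdapted F x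
  mem : ∀ k ω, x k ω ∈ X
  norm_sub_le : ∀ k ω, ∀ y ∈ X, ‖x (k + 1) ω - (x k ω + a k • (G (x k ω) + w k ω))‖ ≤
    ‖y - (x k ω + a k • (G (x k ω) + w k ω))‖
  memLp_noise : ∀ k, MemLp (w k) 2 P
  condExp_noise : ∀ k, P[w k | F k] =ᵐ[P] 0
  condExp_norm_sq_noise_le : ∀ k, ∀ᵐ ω ∂P, P[fun ω => ‖w k ω‖ ^ 2 | F k] ω ≤ ν ^ 2

namespace IsProjectedStochasticApproximation

variable {P : Measure Ω} {F : Filtration ℕ m0} {X : Set E} {G : E → E} {a : ℕ → ℝ} {ν : ℝ}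
  {w x : ℕ → Ω → E} {s : E} {C L : ℝ}

theorem restrict [CompleteSpace E] [IsFiniteMeasure P]
    (hx : IsProjectedStochasticApproximation X G a ν w x F P)
    {A : Set Ω} (hA : MeasurableSet[F 0] A) :
    IsProjectedStochasticApproximation X G a ν w x F (P.restrict A) where
  stronglyAdapted := hx.stronglyAdapted
  mem := hx.mem
  norm_sub_le := hx.norm_sub_le
  memLp_noise k := (hx.memLp_noise k).restrict A
  condExp_noise k := by
    filter_upwards [condExp_restrict_ae_eq_restrict (F.le k) (F.mono k.zero_le _ hA)
      ((hx.memLp_noise k).integrable one_le_two), ae_restrict_of_ae (hx.condExp_noise k)]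
      with ω hrestrict hzero
    rw [hrestrict, hzero]
  condExp_norm_sq_noise_le k := by
    filter_upwards [condExp_restrict_ae_eq_restrict (F.le k) (F.mono k.zero_le _ hA)
      ((hx.memLp_noise k).integrable_norm_pow two_ne_zero),
      ae_restrict_of_ae (hx.condExp_norm_sq_noise_le k)] with ω hrestrict hle
    rwa [hrestrict]

theorem norm_succ_sub_le (hx : IsProjectedStochasticApproximation X G a ν w x F P)
    (hX : Convex ℝ X) (hs : s ∈ X) (k : ℕ) (ω : Ω) :
    ‖x (k + 1) ω - s‖ ≤ ‖(x k ω - s + a k • G (x k ω)) + a k • w k ω‖ := by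
  convert norm_sub_le_of_forall_norm_sub_le hX (hx.mem (k + 1) ω) (hx.norm_sub_le k ω) hs using 2
  rw [smul_add]
  abel

theorem stronglyMeasurable_sub_add_smul (hx : IsProjectedStochasticApproximation X G a ν w x F P)
    (hG_adapted : StronglyAdapted F fun k ω => G (x k ω)) (s : E) (k : ℕ) :
    StronglyMeasurable[F k] fun ω => x k ω - s + a k • G (x k ω) :=
  ((hx.stronglyAdapted k).sub stronglyMeasurable_const).add ((hG_adapted k).const_smul (a k))

theorem condExp_norm_smul_noise_sq_le (hx : IsProjectedStochasticApproximation X G a ν w x F P)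
    (k : ℕ) : P[fun ω => ‖a k • w k ω‖ ^ 2 | F k] ≤ᵐ[P] fun _ => a k ^ 2 * ν ^ 2 := by
  have hscale : (fun ω => ‖a k • w k ω‖ ^ 2) = (a k ^ 2) • fun ω => ‖w k ω‖ ^ 2 :=
    funext fun ω => by simp [norm_smul, mul_pow]
  rw [hscale]
  filter_upwards [condExp_smul (a k ^ 2) (fun ω => ‖w k ω‖ ^ 2) (F k),
    hx.condExp_norm_sq_noise_le k] with ω hsmul hle
  rw [hsmul]
  exact mul_le_mul_of_nonneg_left hle (sq_nonneg (a k))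

variable [IsFiniteMeasure P]

theorem memLp_comp (hx : IsProjectedStochasticApproximation X G a ν w x F P)
    (hG_adapted : StronglyAdapted F fun k ω => G (x k ω))
    (hG : ∀ y ∈ X, ‖G y‖ ≤ C + L * ‖y - s‖) {k : ℕ} (hxk : MemLp (fun ω => x k ω - s) 2 P) :
    MemLp (fun ω => G (x k ω)) 2 P :=
  ((memLp_const C).add (hxk.norm.const_mul L)).mono'
    ((hG_adapted k).mono (F.le k)).aestronglyMeasurable
    (ae_of_all _ fun ω => hG _ (hx.mem k ω))

theorem memLp_sub (hx : IsProjectedStochasticApproximation X G a ν w x F P) (hX : Convex ℝ X)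
    (hs : s ∈ X) (hG_adapted : StronglyAdapted F fun k ω => G (x k ω))
    (hG : ∀ y ∈ X, ‖G y‖ ≤ C + L * ‖y - s‖) (hx0 : MemLp (fun ω => x 0 ω - s) 2 P) (k : ℕ) :
    MemLp (fun ω => x k ω - s) 2 P := by
  induction k with
  | zero => exact hx0
  | succ k ih =>
    have hstep : MemLp (fun ω => (x k ω - s + a k • G (x k ω)) + a k • w k ω) 2 P :=
      (ih.add ((hx.memLp_comp hG_adapted hG ih).const_smul (a k))).add
        ((hx.memLp_noise k).const_smul (a k))
    exact hstep.of_le (((hx.stronglyAdapted (k + 1)).mono (F.le _)).sub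
      stronglyMeasurable_const).aestronglyMeasurable
      (ae_of_all _ (hx.norm_succ_sub_le hX hs k))

theorem condExp_norm_succ_sub_sq_le [CompleteSpace E]
    (hx : IsProjectedStochasticApproximation X G a ν w x F P)
    (hX : Convex ℝ X) (hs : s ∈ X) (hG_adapted : StronglyAdapted F fun k ω => G (x k ω))
    (hG : ∀ y ∈ X, ‖G y‖ ≤ C + L * ‖y - s‖) (hx0 : MemLp (fun ω => x 0 ω - s) 2 P) (k : ℕ) :
    P[fun ω => ‖x (k + 1) ω - s‖ ^ 2 | F k] ≤ᵐ[P] fun ω =>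
      (1 + 2 * L ^ 2 * a k ^ 2) * ‖x k ω - s‖ ^ 2 - 2 * a k * ⟪G (x k ω), s - x k ω⟫_ℝ +
        (2 * C ^ 2 + ν ^ 2) * a k ^ 2 := by
  have hL2 := hx.memLp_sub hX hs hG_adapted hG hx0
  have hu : MemLp (fun ω => x k ω - s + a k • G (x k ω)) 2 P :=
    (hL2 k).add ((hx.memLp_comp hG_adapted hG (hL2 k)).const_smul (a k))
  have hv : MemLp (fun ω => a k • w k ω) 2 P := (hx.memLp_noise k).const_smul (a k)
  have hv_zero : P[fun ω => a k • w k ω | F k] =ᵐ[P] 0 := by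
    filter_upwards [condExp_smul (a k) (w k) (F k), hx.condExp_noise k] with ω hsmul hzero
    exact hsmul.trans (by simp [hzero])
  have hproj : P[fun ω => ‖x (k + 1) ω - s‖ ^ 2 | F k] ≤ᵐ[P]
      P[fun ω => ‖(x k ω - s + a k • G (x k ω)) + a k • w k ω‖ ^ 2 | F k] :=
    condExp_mono ((hL2 (k + 1)).integrable_norm_pow two_ne_zero)
      ((hu.add hv).integrable_norm_pow two_ne_zero)
      (ae_of_all _ fun ω => pow_le_pow_left₀ (norm_nonneg _) (hx.norm_succ_sub_le hX hs k ω) 2)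
  have hpythagoras := condExp_norm_add_sq (F.le k)
    (hx.stronglyMeasurable_sub_add_smul hG_adapted s k) hu hv hv_zero
  filter_upwards [hproj, hpythagoras, hx.condExp_norm_smul_noise_sq_le k] with ω hproj hpyth hnoise
  linarith [norm_sub_add_smul_sq_le (hG _ (hx.mem k ω)) (a k)]

theorem ae_tendsto_dist_and_summable_of_memLp [CompleteSpace E]
    (hx : IsProjectedStochasticApproximation X G a ν w x F P) (hX : Convex ℝ X) (hs : s ∈ X)
    (hG_adapted : StronglyAdapted F fun k ω => G (x k ω))
    (hG : ∀ y ∈ X, ‖G y‖ ≤ C + L * ‖y - s‖) (hdrift : ∀ y ∈ X, 0 ≤ ⟪G y, s - y⟫_ℝ)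
    (ha : ∀ k, 0 ≤ a k) (ha_sq : Summable fun k => a k ^ 2)
    (hx0 : MemLp (fun ω => x 0 ω - s) 2 P) :
    ∀ᵐ ω ∂P, (∃ r, Tendsto (fun k => dist (x k ω) s) atTop (𝓝 r)) ∧
      Summable fun k => a k * ⟪G (x k ω), s - x k ω⟫_ℝ := by
  have hL2 := hx.memLp_sub hX hs hG_adapted hG hx0
  have hsub_meas (k : ℕ) : StronglyMeasurable[F k] fun ω => x k ω - s :=
    (hx.stronglyAdapted k).sub stronglyMeasurable_const
  have hdrift_int (k : ℕ) : Integrable (fun ω => ⟪G (x k ω), s - x k ω⟫_ℝ) P :=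
    integrable_inner_of_memLp_two (hx.memLp_comp hG_adapted hG (hL2 k))
      (by simpa only [Pi.neg_def, neg_sub] using (hL2 k).neg)
  filter_upwards [robbins_siegmund (V := fun k ω => ‖x k ω - s‖ ^ 2)
    (g := fun k ω => 2 * a k * ⟪G (x k ω), s - x k ω⟫_ℝ)
    (fun k => (hsub_meas k).norm.pow 2)
    (fun k => ((hG_adapted k).inner
      (stronglyMeasurable_const.sub (hx.stronglyAdapted k))).const_mul _)
    (fun k => (hL2 k).integrable_norm_pow two_ne_zero) (fun k => (hdrift_int k).const_mul _)
    (fun k ω => sq_nonneg _)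
    (fun k ω => mul_nonneg (mul_nonneg zero_le_two (ha k)) (hdrift _ (hx.mem k ω)))
    (fun k => by positivity) (ha_sq.mul_left (2 * C ^ 2 + ν ^ 2))
    (fun k => by positivity) (ha_sq.mul_left (2 * L ^ 2))
    (hx.condExp_norm_succ_sub_sq_le hX hs hG_adapted hG hx0)] with ω ⟨⟨l, hl⟩, hsum⟩
  refine ⟨⟨√l, ?_⟩, ?_⟩
  · simpa only [← dist_eq_norm, Real.sqrt_sq dist_nonneg] using hl.sqrt
  · simpa only [mul_assoc, summable_mul_left_iff (two_ne_zero (α := ℝ))] using hsum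

theorem ae_tendsto_dist_and_summable [CompleteSpace E]
    (hx : IsProjectedStochasticApproximation X G a ν w x F P) (hX : Convex ℝ X) (hs : s ∈ X)
    (hG_adapted : StronglyAdapted F fun k ω => G (x k ω))
    (hG : ∀ y ∈ X, ‖G y‖ ≤ C + L * ‖y - s‖) (hdrift : ∀ y ∈ X, 0 ≤ ⟪G y, s - y⟫_ℝ)
    (ha : ∀ k, 0 ≤ a k) (ha_sq : Summable fun k => a k ^ 2) :
    ∀ᵐ ω ∂P, (∃ r, Tendsto (fun k => dist (x k ω) s) atTop (𝓝 r)) ∧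
      Summable fun k => a k * ⟪G (x k ω), s - x k ω⟫_ℝ := by
  -- `x 0` need not be square integrable, so restrict `P` to the `F 0`-events `{‖x 0 - s‖ ≤ N}`.
  have hsub_meas : StronglyMeasurable[F 0] fun ω => x 0 ω - s :=
    (hx.stronglyAdapted 0).sub stronglyMeasurable_const
  have hA (N : ℕ) : MeasurableSet[F 0] {ω | ‖x 0 ω - s‖ ≤ N} :=
    hsub_meas.norm.measurable measurableSet_Iic
  have hlocal (N : ℕ) := (ae_restrict_iff' (F.le 0 _ (hA N))).1 <|
    (hx.restrict (hA N)).ae_tendsto_dist_and_summable_of_memLp hX hs hG_adapted hG hdrift ha ha_sq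
      (.of_bound (hsub_meas.mono (F.le 0)).aestronglyMeasurable N
        (ae_restrict_mem (F.le 0 _ (hA N))))
  filter_upwards [ae_all_iff.2 hlocal] with ω hω
  obtain ⟨N, hN⟩ := exists_nat_ge ‖x 0 ω - s‖
  exact hω N hN

theorem ae_exists_mem_tendsto [FiniteDimensional ℝ E] {S : Set E}
    (hx : IsProjectedStochasticApproximation X G a ν w x F P)
    (hX_closed : IsClosed X) (hX : Convex ℝ X) (hG_cont : ContinuousOn G X)
    (hG : ∀ y ∈ X, ‖G y‖ ≤ C * (1 + ‖y‖)) (hS : S.Nonempty) (hSX : S ⊆ X)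
    (hdrift : ∀ s ∈ S, ∀ y ∈ X, 0 ≤ ⟪G y, s - y⟫_ℝ)
    (hdrift_zero : ∀ s ∈ S, ∀ y ∈ X, ⟪G y, s - y⟫_ℝ ≤ 0 → y ∈ S)
    (ha : ∀ k, 0 ≤ a k) (ha_div : ¬Summable a) (ha_sq : Summable fun k => a k ^ 2) :
    ∀ᵐ ω ∂P, ∃ q ∈ S, Tendsto (fun k => x k ω) atTop (𝓝 q) := by
  have : CompleteSpace E := FiniteDimensional.complete ℝ E
  have : ProperSpace E := FiniteDimensional.proper_real E
  have hG_adapted : StronglyAdapted F fun k ω => G (x k ω) := fun k =>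
    stronglyMeasurable_comp_of_continuousOn hG_cont (hx.stronglyAdapted k) (hx.mem k)
  have hfejer (s : E) (hs : s ∈ S) := hx.ae_tendsto_dist_and_summable hX (hSX hs) hG_adapted
    (fun y hy => norm_le_mul_one_add_norm_add_mul_norm_sub (hG y hy) s) (hdrift s hs) ha ha_sq
  obtain ⟨s₀, hs₀⟩ := hS
  obtain ⟨D, hDS, hD_count, hSD⟩ :=
    (TopologicalSpace.IsSeparable.of_separableSpace S).exists_countable_dense_subset
  filter_upwards [hfejer s₀ hs₀, (ae_ball_iff hD_count).2 fun d hd => hfejer d (hDS hd)]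
    with ω ⟨⟨r, hr⟩, hsum⟩ hdist
  obtain ⟨q, hqX, hq, hq_cluster⟩ := exists_mapClusterPt_nonpos_of_summable_mul hX_closed
    (hG_cont.inner (continuousOn_const.sub continuousOn_id)) ha ha_div (hx.mem · ω)
    (isBounded_range_of_tendsto_dist hr) hsum
  have hqS : q ∈ S := hdrift_zero s₀ hs₀ q hqX hq
  exact ⟨q, hqS, tendsto_of_mapClusterPt_of_tendsto_dist hq_cluster (hSD hqS)
    fun d hd => (hdist d hd).1⟩

end IsProjectedStochasticApproximation

end StochasticApproximation

theorem stmt_11_general {E Ω : Type*} [NormedAddCommGroup E] [InnerProductSpace ℝ E]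
    [FiniteDimensional ℝ E] {m0 : MeasurableSpace Ω} {P : Measure Ω} [IsFiniteMeasure P]
    {F : Filtration ℕ m0} {X : Set E} (hX_closed : IsClosed X) {f : E → ℝ} {f' : E → E}
    (hf' : ∀ y ∈ X, HasGradientAt f (f' y) y) (hf'_cont : ContinuousOn f' X) {C : ℝ}
    (hf'_growth : ∀ y ∈ X, ‖f' y‖ ≤ C * (1 + ‖y‖)) (hf_pos : ∀ y ∈ X, 0 < f y)
    (hconv : ConvexOn ℝ X fun y => 1 / f y)
    (hS : {y ∈ X | ∀ z ∈ X, 1 / f y ≤ 1 / f z}.Nonempty) {a : ℕ → ℝ} (ha : ∀ k, 0 ≤ a k)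
    (ha_div : ¬Summable a) (ha_sq : Summable fun k => a k ^ 2) {ν : ℝ} {w x : ℕ → Ω → E}
    (hx : IsProjectedStochasticApproximation X f' a ν w x F P) :
    ∀ᵐ ω ∂P, ∃ q ∈ {y ∈ X | ∀ z ∈ X, 1 / f y ≤ 1 / f z},
      Tendsto (fun k => x k ω) atTop (𝓝 q) := by
  have : CompleteSpace E := FiniteDimensional.complete ℝ E
  have hinner (s : E) (hs : s ∈ X) (y : E) (hy : y ∈ X) :=
    sq_mul_one_div_sub_one_div_le_inner hconv (hf' y hy) hy hs (hf_pos y hy).ne'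
  refine hx.ae_exists_mem_tendsto hX_closed hconv.1 hf'_cont hf'_growth hS (Set.sep_subset _ _)
    (fun s hs y hy => ?_) (fun s hs y hy hle => ⟨hy, fun z hz => ?_⟩) ha ha_div ha_sq
  · exact (mul_nonneg (sq_nonneg _) (sub_nonneg.2 (hs.2 y hy))).trans (hinner s hs.1 y hy)
  · have hgap : 1 / f y - 1 / f s ≤ 0 :=
      nonpos_of_mul_nonpos_right ((hinner s hs.1 y hy).trans hle) (pow_pos (hf_pos y hy) 2)
    linarith [hs.2 z hz]

/-- Proposition 2(i): almost-sure convergence of the modified stochastic approximation scheme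
`x_{k+1} = Π_X(x_k + (γ_k/β_k)(∇f(x_k) + w_k))` to the solution set of `min_{x ∈ X} 1/f(x)`. -/
theorem stmt_11 {n : ℕ} {Ω : Type*} {m0 : MeasurableSpace Ω}
    (P : Measure Ω) [IsProbabilityMeasure P] (F : Filtration ℕ m0)
    (X : Set (EuclideanSpace ℝ (Fin n))) (hXclosed : IsClosed X) (hXconv : Convex ℝ X)
    (f : EuclideanSpace ℝ (Fin n) → ℝ)
    (f' : EuclideanSpace ℝ (Fin n) → EuclideanSpace ℝ (Fin n))
    (hdiff : ∀ x, HasGradientAt f (f' x) x)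
    (L : ℝ) (hLip : ∀ x y, ‖f' x - f' y‖ ≤ L * ‖x - y‖)
    (ε : ℝ) (hε0 : 0 < ε) (hε1 : ε ≤ 1)
    (hconv : ConvexOn ℝ X (fun x => 1 / f x))
    (hflb : ∀ x ∈ X, ε ≤ f x) (hfub : ∀ x ∈ X, f x ≤ 1)
    (hXstarne : {x ∈ X | ∀ y ∈ X, 1 / f x ≤ 1 / f y}.Nonempty)
    (γ β : ℕ → ℝ) (hγpos : ∀ k, 0 < γ k) (hβpos : ∀ k, 0 < β k) (hβε : ∀ k, β k ≤ ε)
    (hdiv : Tendsto (fun K => ∑ k ∈ Finset.range K, γ k / β k) atTop atTop)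
    (hsq : Summable fun k => (γ k / β k) ^ 2)
    (xk : ℕ → Ω → EuclideanSpace ℝ (Fin n)) (hadapted : Adapted F xk)
    (hx0X : ∀ ω, xk 0 ω ∈ X)
    (w : ℕ → Ω → EuclideanSpace ℝ (Fin n))
    (hwmeas : ∀ k, StronglyMeasurable[F (k + 1)] (w k))
    (hwint : ∀ k, Integrable (w k) P)
    (hw0 : ∀ k, P[w k | F k] =ᵐ[P] 0)
    (ν : ℝ) (hν : 0 ≤ ν)
    (hwsqint : ∀ k, Integrable (fun ω => ‖w k ω‖ ^ 2) P)
    (hw2 : ∀ k, ∀ᵐ ω ∂P, (P[fun ω => ‖w k ω‖ ^ 2 | F k]) ω ≤ ν ^ 2)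
    (hiterX : ∀ k ω, xk (k + 1) ω ∈ X)
    (hiterproj : ∀ k ω, ∀ y ∈ X,
      ‖xk (k + 1) ω - (xk k ω + (γ k / β k) • (f' (xk k ω) + w k ω))‖ ≤
        ‖y - (xk k ω + (γ k / β k) • (f' (xk k ω) + w k ω))‖) :
    ∀ᵐ ω ∂P, ∃ q ∈ {x ∈ X | ∀ y ∈ X, 1 / f x ≤ 1 / f y},
      Tendsto (fun k => xk k ω) atTop (nhds q) := by
  have hlip : LipschitzWith L.toNNReal f' := .of_dist_le' fun y z => by
    simpa only [dist_eq_norm] using hLip y z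
  have hstep_nonneg (k : ℕ) : 0 ≤ γ k / β k := (div_pos (hγpos k) (hβpos k)).le
  have hscheme : IsProjectedStochasticApproximation X f' (fun k => γ k / β k) ν w xk F P := {
    stronglyAdapted := fun k => (hadapted k).stronglyMeasurable
    mem := fun k => k.casesOn hx0X hiterX
    norm_sub_le := hiterproj
    memLp_noise := fun k => (memLp_two_iff_integrable_sq_norm (hwint k).1).2 (hwsqint k)
    condExp_noise := hw0
    condExp_norm_sq_noise_le := hw2 }
  exact stmt_11_general hXclosed (fun y _ => hdiff y) hlip.continuous.continuousOn
    (fun y _ => norm_le_mul_one_add_norm_of_lipschitzWith hlip y)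
    (fun y hy => hε0.trans_le (hflb y hy)) hconv hXstarne hstep_nonneg
    ((not_summable_iff_tendsto_nat_atTop_of_nonneg hstep_nonneg).2 hdiv) hsq hscheme
end
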